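/- arXiv:1212.1377 — 2 statements merged into one kernel-verified Lean document; each statement's English description precedes it below -/
import Mathlib

section
/- Let P be a real-valued square-integrable random variable and let P_ℓ (ℓ = 0,1,2,…) be a sequence of approximations to P. Suppose there exist positive constants α, β, γ, c₁, c₂, c₃ with α ≥ (1/2)·min(β,γ) such that: (i) |E[P_ℓ − P]| ≤ c₁·2^{−αℓ} for all ℓ; and for every level ℓ and every number of samples N_ℓ ∈ ℕ₊ there is an estimator Y_ℓ (the estimators at different levels being independent) satisfying (ii) E[Y₀] = E[P₀] and E[Y_ℓ] = E[P_ℓ − P_{ℓ−1}] for ℓ > 0, (iii) Var[Y_ℓ] ≤ c₂·N_ℓ^{−1}·2^{−βℓ}, and (iv) the computational cost C_ℓ of Y_ℓ satisfies C_ℓ ≤ c₃·N_ℓ·2^{γℓ}. Then there exists a positive constant c₄ such that for every ε with 0 < ε < e^{−1} there are a level L and sample sizes N₀,…,N_L for which the multilevel estimator Y = Σ_{ℓ=0}^{L} Y_ℓ has mean-square error E[(Y − E[P])²] < ε², with total computational cost C = Σ_{ℓ=0}^{L} C_ℓ bounded by: C ≤ c₄·ε^{−2} if β > γ; C ≤ c₄·ε^{−2}(log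 ε)² if β = γ; and C ≤ c₄·ε^{−2−(γ−β)/α} if 0 < β < γ. -/
open MeasureTheory ProbabilityTheory

lemma mlmc_L (α c₁ : ℝ) (hα : 0 < α) (hc₁ : 0 < c₁) :
    ∃ K ≥ (1:ℝ), ∃ D > (0:ℝ), ∀ ε : ℝ, 0 < ε → ε < Real.exp (-1) → ∃ L : ℕ,
      c₁ * (2:ℝ) ^ (-(α * L)) ≤ ε / 2 ∧
      (∀ s : ℝ, 0 ≤ s → (2:ℝ) ^ (s * L) ≤ K ^ (s / α) * ε ^ (-(s / α))) ∧
      ((L:ℝ) + 1 ≤ D * (-Real.log ε)) := by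
  set K₀ : ℝ := max (2 * c₁) 1 with hK₀
  have hK1 : 1 ≤ K₀ := le_max_right _ _
  have hK2 : 2 * c₁ ≤ K₀ := le_max_left _ _
  have hl2 : 0 < Real.log 2 := Real.log_pos (by norm_num)
  have hlK : 0 ≤ Real.log K₀ := Real.log_nonneg hK1
  have h2α : (1:ℝ) ≤ 2 ^ α := Real.one_le_rpow (by norm_num) hα.le
  refine ⟨K₀ * 2 ^ α, by nlinarith, (Real.log K₀ + 1) / (Real.log 2 * α) + 2, by positivity, ?_⟩
  intro ε hε hε1
  have hlog : Real.log ε < -1 := by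
    have := Real.log_lt_log hε hε1
    rwa [Real.log_exp] at this
  have hε1' : ε < 1 := hε1.trans (by rw [Real.exp_lt_one_iff]; norm_num)
  set x : ℝ := (Real.log K₀ - Real.log ε) / (Real.log 2 * α) with hx
  have hx0 : 0 ≤ x := by apply div_nonneg <;> [linarith; positivity]
  have hxα : Real.log 2 * (α * x) = Real.log K₀ - Real.log ε := by rw [hx]; field_simp
  have h2x : (2:ℝ) ^ (α * x) = K₀ / ε := by
    rw [Real.rpow_def_of_pos (by norm_num), hxα, Real.exp_sub, Real.exp_log (by linarith),
      Real.exp_log hε]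
  have hL1 : x ≤ ⌈x⌉₊ := Nat.le_ceil x
  have hL2 : (⌈x⌉₊ : ℝ) < x + 1 := Nat.ceil_lt_add_one hx0
  refine ⟨⌈x⌉₊, ?_, ?_, ?_⟩
  · have h1 : (2:ℝ) ^ (-(α * (⌈x⌉₊:ℝ))) ≤ ε / K₀ := by
      calc (2:ℝ) ^ (-(α * (⌈x⌉₊:ℝ))) ≤ 2 ^ (-(α * x)) := by
            apply Real.rpow_le_rpow_of_exponent_le (by norm_num)
            nlinarith
        _ = ε / K₀ := by rw [Real.rpow_neg (by norm_num), h2x, inv_div]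
    calc _ ≤ c₁ * (ε / K₀) := by gcongr
      _ ≤ ε / 2 := by
        rw [mul_div_assoc', div_le_div_iff₀ (by linarith) (by norm_num)]
        nlinarith
  · intro s hs
    have h1 : (2:ℝ) ^ (α * (⌈x⌉₊:ℝ)) ≤ K₀ * 2 ^ α * ε⁻¹ := by
      calc (2:ℝ) ^ (α * (⌈x⌉₊:ℝ)) ≤ 2 ^ (α * x + α) := by
            apply Real.rpow_le_rpow_of_exponent_le (by norm_num)
            nlinarith
        _ = _ := by rw [Real.rpow_add (by norm_num), h2x]; ring
    calc (2:ℝ) ^ (s * (⌈x⌉₊:ℝ)) = ((2:ℝ) ^ (α * (⌈x⌉₊:ℝ))) ^ (s / α) := by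
          rw [← Real.rpow_mul (by norm_num)]; congr 1; field_simp
      _ ≤ (K₀ * 2 ^ α * ε⁻¹) ^ (s / α) := by
          apply Real.rpow_le_rpow (by positivity) h1 (by positivity)
      _ = _ := by
          rw [Real.mul_rpow (by positivity) (by positivity), Real.inv_rpow hε.le,
            Real.rpow_neg hε.le]
  · have h3 : x ≤ (Real.log K₀ + 1) / (Real.log 2 * α) * (-Real.log ε) := by
      rw [hx, div_mul_eq_mul_div]
      gcongr
      nlinarith
    linarith

lemma mlmc_geom (s : ℝ) (hs : 0 < s) : ∃ G > (0:ℝ), ∀ L : ℕ,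
    ∑ l ∈ Finset.range (L + 1), (2:ℝ) ^ (s * l) ≤ G * 2 ^ (s * L) := by
  have hr : (1:ℝ) < 2 ^ s := Real.one_lt_rpow (by norm_num) hs
  refine ⟨2 ^ s / (2 ^ s - 1), div_pos (by positivity) (by linarith), fun L => ?_⟩
  have h : ∀ l : ℕ, (2:ℝ) ^ (s * l) = (2 ^ s) ^ l := fun l => by
    rw [Real.rpow_mul (by norm_num), Real.rpow_natCast]
  simp only [h]
  rw [geom_sum_eq hr.ne', div_mul_eq_mul_div, pow_succ']
  have : (0:ℝ) < 2 ^ s - 1 := by linarith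
  gcongr
  linarith

lemma mlmc_geom' (s : ℝ) (hs : s < 0) : ∃ G > (0:ℝ), ∀ L : ℕ,
    ∑ l ∈ Finset.range (L + 1), (2:ℝ) ^ (s * l) ≤ G := by
  have hr : (2:ℝ) ^ s < 1 := Real.rpow_lt_one_of_one_lt_of_neg (by norm_num) hs
  have hr0 : (0:ℝ) < 2 ^ s := by positivity
  refine ⟨1 / (1 - 2 ^ s), div_pos (by positivity) (by linarith), fun L => ?_⟩
  have h : ∀ l : ℕ, (2:ℝ) ^ (s * l) = (2 ^ s) ^ l := fun l => by
    rw [Real.rpow_mul (by norm_num), Real.rpow_natCast]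
  simp only [h]
  rw [geom_sum_eq hr.ne, ← neg_div_neg_eq, neg_sub, neg_sub]
  have : (0:ℝ) < 1 - 2 ^ s := by linarith
  gcongr
  have := pow_pos hr0 (L+1)
  linarith

open scoped Classical in
lemma mlmc_bound (α β γ c₁ c₂ c₃ : ℝ)
    (hα : 0 < α) (hγ : 0 < γ)
    (hc₁ : 0 < c₁) (hc₂ : 0 < c₂) (hc₃ : 0 < c₃)
    (hαβγ : (1 / 2) * min β γ ≤ α) :
    ∃ c₄ > (0 : ℝ), ∀ ε : ℝ, 0 < ε → ε < Real.exp (-1) → ∃ L : ℕ,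
      c₁ * (2:ℝ) ^ (-(α * L)) ≤ ε / 2 ∧
      c₃ * (2 * c₂ * ε ^ (-2:ℝ) * (∑ l ∈ Finset.range (L + 1), (2:ℝ) ^ ((γ - β) / 2 * l)) ^ 2
        + ∑ l ∈ Finset.range (L + 1), (2:ℝ) ^ (γ * l)) ≤
          if γ < β then c₄ * ε ^ (-2 : ℝ)
          else if β = γ then c₄ * ε ^ (-2 : ℝ) * Real.log ε ^ 2
          else c₄ * ε ^ (-2 - (γ - β) / α) := by
  obtain ⟨K, hK, D, hD, hL⟩ := mlmc_L α c₁ hα hc₁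
  obtain ⟨G, hG, hGL⟩ := mlmc_geom γ hγ
  have hlog : ∀ ε : ℝ, 0 < ε → ε < Real.exp (-1) → ε < 1 ∧ 1 ≤ Real.log ε ^ 2 := by
    intro ε hε hε1
    have := Real.log_lt_log hε hε1
    rw [Real.log_exp] at this
    exact ⟨hε1.trans (by rw [Real.exp_lt_one_iff]; norm_num), by nlinarith⟩
  -- the rounding part of the cost
  have hR : ∀ ε : ℝ, 0 < ε → ε < 1 → ∀ L : ℕ, ∀ t : ℝ,
      (∀ s : ℝ, 0 ≤ s → (2:ℝ) ^ (s * L) ≤ K ^ (s / α) * ε ^ (-(s / α))) → γ / α ≤ t →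
      ∑ l ∈ Finset.range (L + 1), (2:ℝ) ^ (γ * l) ≤ G * K ^ (γ / α) * ε ^ (-t) := by
    intro ε hε hε1 L t h ht
    calc _ ≤ G * 2 ^ (γ * L) := hGL L
      _ ≤ G * (K ^ (γ / α) * ε ^ (-(γ / α))) := by gcongr; exact h γ hγ.le
      _ ≤ G * (K ^ (γ / α) * ε ^ (-t)) := by
        gcongr 2
        exact Real.rpow_le_rpow_of_exponent_ge hε hε1.le (by linarith)
      _ = _ := by ring
  rcases lt_trichotomy γ β with h | h | h
  · obtain ⟨G', hG', hS⟩ := mlmc_geom' ((γ - β) / 2) (by linarith)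
    refine ⟨c₃ * (2 * c₂ * G' ^ 2 + G * K ^ (γ / α)), by positivity, fun ε hε hε1 => ?_⟩
    obtain ⟨L, h1, h2, h3⟩ := hL ε hε hε1
    obtain ⟨e1, e2⟩ := hlog ε hε hε1
    refine ⟨L, h1, ?_⟩
    rw [if_pos h]
    rw [min_eq_right h.le] at hαβγ
    have := hR ε hε e1 L 2 h2 (by rw [div_le_iff₀ hα]; linarith)
    calc _ ≤ c₃ * (2 * c₂ * ε ^ (-2:ℝ) * G' ^ 2 + G * K ^ (γ / α) * ε ^ (-2:ℝ)) := by
          gcongr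
          exact hS L
      _ = _ := by ring
  · subst h
    refine ⟨c₃ * (2 * c₂ * D ^ 2 + G * K ^ (γ / α)), by positivity, fun ε hε hε1 => ?_⟩
    obtain ⟨L, h1, h2, h3⟩ := hL ε hε hε1
    obtain ⟨e1, e2⟩ := hlog ε hε hε1
    refine ⟨L, h1, ?_⟩
    rw [if_neg (lt_irrefl _), if_pos rfl]
    rw [min_self] at hαβγ
    have := hR ε hε e1 L 2 h2 (by rw [div_le_iff₀ hα]; linarith)
    have hS : ∑ l ∈ Finset.range (L + 1), (2:ℝ) ^ ((γ - γ) / 2 * l) = (L:ℝ) + 1 := by simp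
    rw [hS]
    calc _ ≤ c₃ * (2 * c₂ * ε ^ (-2:ℝ) * (D * (-Real.log ε)) ^ 2
            + G * K ^ (γ / α) * ε ^ (-2:ℝ) * Real.log ε ^ 2) := by
          gcongr
          exact this.trans (le_mul_of_one_le_right (by positivity) e2)
      _ = _ := by ring
  · obtain ⟨G', hG', hS⟩ := mlmc_geom ((γ - β) / 2) (by linarith)
    refine ⟨c₃ * (2 * c₂ * G' ^ 2 * K ^ ((γ - β) / α) + G * K ^ (γ / α)), by positivity,
      fun ε hε hε1 => ?_⟩
    obtain ⟨L, h1, h2, h3⟩ := hL ε hε hε1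
    obtain ⟨e1, e2⟩ := hlog ε hε hε1
    refine ⟨L, h1, ?_⟩
    rw [if_neg h.not_gt, if_neg h.ne]
    rw [min_eq_left h.le] at hαβγ
    have := hR ε hε e1 L (2 + (γ - β) / α) h2 (by
      rw [← sub_nonneg]
      have : 2 + (γ - β) / α - γ / α = (2 * α - β) / α := by field_simp; ring
      rw [this]; apply div_nonneg <;> linarith)
    have e : -(2 + (γ - β) / α) = -2 - (γ - β) / α := by ring
    rw [e] at this
    have hS2 : (∑ l ∈ Finset.range (L + 1), (2:ℝ) ^ ((γ - β) / 2 * l)) ^ 2 ≤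
        G' ^ 2 * (K ^ ((γ - β) / α) * ε ^ (-((γ - β) / α))) := by
      calc _ ≤ (G' * 2 ^ ((γ - β) / 2 * L)) ^ 2 := by gcongr; exact hS L
        _ = G' ^ 2 * 2 ^ ((γ - β) * L) := by
          rw [mul_pow, ← Real.rpow_natCast (2 ^ _), ← Real.rpow_mul (by norm_num)]
          congr 2; push_cast; ring
        _ ≤ _ := by gcongr; exact h2 _ (by linarith)
    have e3 : ε ^ (-2 - (γ - β) / α) = ε ^ (-2:ℝ) * ε ^ (-((γ - β) / α)) := by
      rw [← Real.rpow_add hε]; rfl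
    calc _ ≤ c₃ * (2 * c₂ * ε ^ (-2:ℝ) * (G' ^ 2 * (K ^ ((γ - β) / α) * ε ^ (-((γ - β) / α))))
            + G * K ^ (γ / α) * ε ^ (-2 - (γ - β) / α)) := by
          gcongr
      _ = _ := by rw [e3]; ring

lemma mlmc_mse {Ω : Type*} [MeasurableSpace Ω] (μ : Measure Ω) [IsProbabilityMeasure μ]
    (Z : ℕ → Ω → ℝ) (hZ : ∀ l, MemLp (Z l) 2 μ) (hi : iIndepFun Z μ) (m : ℝ) (n : ℕ) :
    ∫ ω, ((∑ l ∈ Finset.range n, Z l ω) - m) ^ 2 ∂μ =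
      (∑ l ∈ Finset.range n, variance (Z l) μ) +
        ((∑ l ∈ Finset.range n, ∫ ω, Z l ω ∂μ) - m) ^ 2 := by
  have hS : MemLp (∑ l ∈ Finset.range n, Z l) 2 μ := memLp_finsetSum' _ fun l _ => hZ l
  have hm : MemLp (fun ω => (∑ l ∈ Finset.range n, Z l) ω - m) 2 μ :=
    hS.sub (memLp_const m)
  have h1 := variance_eq_sub hm
  rw [variance_sub_const hS.aestronglyMeasurable, IndepFun.variance_sum (fun l _ => hZ l)
    (fun i _ j _ hij => hi.indepFun hij),
    integral_sub (hS.integrable (by norm_num)) (integrable_const m)] at h1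
  simp only [Finset.sum_apply, integral_const, Pi.pow_apply] at h1
  rw [integral_finsetSum _ (fun l _ => (hZ l).integrable (by norm_num))] at h1
  simp at h1
  linarith

open scoped Classical in
/-- the multilevel Monte Carlo complexity theorem.
`P` is a square-integrable payoff, `Papp ℓ` its level-`ℓ` approximation, and for each level `ℓ`
and sample size `N` there is an estimator `Y ℓ N` (estimators at different levels being
independent) with `E[Y 0 N] = E[Papp 0]`, `E[Y ℓ N] = E[Papp ℓ − Papp (ℓ−1)]` for `ℓ > 0`,
`Var[Y ℓ N] ≤ c₂ N⁻¹ 2^{−βℓ}`, cost `cost ℓ N ≤ c₃ N 2^{γℓ}`, and weak error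
`|E[Papp ℓ − P]| ≤ c₁ 2^{−αℓ}`, where `α ≥ ½ min(β,γ)`.  Then there is `c₄ > 0` such that
for every `0 < ε < e⁻¹` one can choose `L` and sample sizes `Ns ℓ` so that the multilevel
estimator `Y = ∑_{ℓ≤L} Y ℓ (Ns ℓ)` has mean-square error below `ε²` at total cost bounded by
`c₄ ε⁻²`, `c₄ ε⁻² (log ε)²`, or `c₄ ε^{−2−(γ−β)/α}` according as `β > γ`, `β = γ`, `β < γ`. -/
theorem mlmc_complexity
    {Ω : Type*} [MeasurableSpace Ω] (μ : Measure Ω) [IsProbabilityMeasure μ]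
    (P : Ω → ℝ) (Papp : ℕ → Ω → ℝ) (Y : ℕ → ℕ+ → Ω → ℝ) (cost : ℕ → ℕ+ → ℝ)
    (α β γ c₁ c₂ c₃ : ℝ)
    (hα : 0 < α) (hβ : 0 < β) (hγ : 0 < γ)
    (hc₁ : 0 < c₁) (hc₂ : 0 < c₂) (hc₃ : 0 < c₃)
    (hαβγ : (1 / 2) * min β γ ≤ α)
    (hP : MemLp P 2 μ)
    (hPapp : ∀ ℓ, MemLp (Papp ℓ) 2 μ)
    (hY : ∀ ℓ N, MemLp (Y ℓ N) 2 μ)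
    (hYindep : ∀ Ns : ℕ → ℕ+,
      iIndepFun (fun ℓ => Y ℓ (Ns ℓ)) μ)
    (hweak : ∀ ℓ : ℕ,
      |(∫ ω, Papp ℓ ω ∂μ) - ∫ ω, P ω ∂μ| ≤ c₁ * (2 : ℝ) ^ (-(α * ℓ)))
    (hmean0 : ∀ N, ∫ ω, Y 0 N ω ∂μ = ∫ ω, Papp 0 ω ∂μ)
    (hmean : ∀ ℓ N, 0 < ℓ →
      ∫ ω, Y ℓ N ω ∂μ = (∫ ω, Papp ℓ ω ∂μ) - ∫ ω, Papp (ℓ - 1) ω ∂μ)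
    (hvar : ∀ ℓ N, variance (Y ℓ N) μ ≤ c₂ * ((N : ℝ))⁻¹ * (2 : ℝ) ^ (-(β * ℓ)))
    (hcost : ∀ ℓ N, cost ℓ N ≤ c₃ * (N : ℝ) * (2 : ℝ) ^ (γ * ℓ)) :
    ∃ c₄ > (0 : ℝ), ∀ ε : ℝ, 0 < ε → ε < Real.exp (-1) →
      ∃ (L : ℕ) (Ns : ℕ → ℕ+),
        (∫ ω, ((∑ ℓ ∈ Finset.range (L + 1), Y ℓ (Ns ℓ) ω) - ∫ ω', P ω' ∂μ) ^ 2 ∂μ) < ε ^ 2 ∧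
        (∑ ℓ ∈ Finset.range (L + 1), cost ℓ (Ns ℓ)) ≤
          if γ < β then c₄ * ε ^ (-2 : ℝ)
          else if β = γ then c₄ * ε ^ (-2 : ℝ) * Real.log ε ^ 2
          else c₄ * ε ^ (-2 - (γ - β) / α) := by
  obtain ⟨c₄, hc₄, H⟩ := mlmc_bound α β γ c₁ c₂ c₃ hα hγ hc₁ hc₂ hc₃ hαβγ
  refine ⟨c₄, hc₄, fun ε hε hε1 => ?_⟩
  obtain ⟨L, hbias, hb⟩ := H ε hε hε1
  set S : ℝ := ∑ l ∈ Finset.range (L + 1), (2:ℝ) ^ ((γ - β) / 2 * l) with hS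
  have hS0 : 0 < S := Finset.sum_pos (fun _ _ => by positivity) (by simp)
  have hε2 : ε ^ (-2:ℝ) = (ε ^ 2)⁻¹ := by
    rw [Real.rpow_neg hε.le]; norm_num
  let x : ℕ → ℝ := fun l => 2 * c₂ * ε ^ (-2:ℝ) * S * 2 ^ (-((β + γ) / 2 * l))
  have hx0 : ∀ l, 0 < x l := fun l => by positivity
  let Ns : ℕ → ℕ+ := fun l => ⟨⌈x l⌉₊, Nat.ceil_pos.2 (hx0 l)⟩
  have hN1 : ∀ l, x l ≤ (Ns l : ℝ) := fun l => Nat.le_ceil _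
  have hN2 : ∀ l, (Ns l : ℝ) ≤ x l + 1 := fun l => (Nat.ceil_lt_add_one (hx0 l).le).le
  refine ⟨L, Ns, ?_, ?_⟩
  · rw [mlmc_mse μ (fun l => Y l (Ns l)) (fun l => hY l _) (hYindep Ns)]
    have hmeanS : ∀ n : ℕ, ∑ l ∈ Finset.range (n + 1), ∫ ω, Y l (Ns l) ω ∂μ
        = ∫ ω, Papp n ω ∂μ := by
      intro n
      induction n with
      | zero => simp [hmean0]
      | succ k ih =>
        rw [Finset.sum_range_succ, ih, hmean (k + 1) _ (Nat.succ_pos k)]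
        simp
    rw [hmeanS]
    have hb2 : ((∫ ω, Papp L ω ∂μ) - ∫ ω, P ω ∂μ) ^ 2 ≤ (ε / 2) ^ 2 := by
      rw [← sq_abs]
      exact pow_le_pow_left₀ (abs_nonneg _) ((hweak L).trans hbias) 2
    have hv : ∑ l ∈ Finset.range (L + 1), variance (Y l (Ns l)) μ ≤ ε ^ 2 / 2 := by
      calc _ ≤ ∑ l ∈ Finset.range (L + 1), ε ^ 2 / (2 * S) * (2:ℝ) ^ ((γ - β) / 2 * l) := by
            apply Finset.sum_le_sum
            intro l _
            calc _ ≤ _ := hvar l (Ns l)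
              _ ≤ c₂ * (x l)⁻¹ * (2:ℝ) ^ (-(β * l)) := by
                have := hx0 l
                gcongr
                exact hN1 l
              _ = _ := by
                have e : (2:ℝ) ^ ((γ - β) / 2 * l) =
                    (2 ^ (-((β + γ) / 2 * l)))⁻¹ * 2 ^ (-(β * l)) := by
                  rw [← Real.rpow_neg (by norm_num), ← Real.rpow_add (by norm_num)]
                  congr 1; ring
                rw [e]
                simp only [x, hε2]
                field_simp
        _ = ε ^ 2 / 2 := by
            rw [← Finset.mul_sum, ← hS]
            field_simp
    nlinarith [pow_pos hε 2]
  · refine le_trans ?_ hb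
    calc _ ≤ ∑ l ∈ Finset.range (L + 1), c₃ * (2 * c₂ * ε ^ (-2:ℝ) * S *
            (2:ℝ) ^ ((γ - β) / 2 * l) + (2:ℝ) ^ (γ * l)) := by
          apply Finset.sum_le_sum
          intro l _
          calc _ ≤ _ := hcost l (Ns l)
            _ ≤ c₃ * (x l + 1) * (2:ℝ) ^ (γ * l) := by
              gcongr
              exact hN2 l
            _ = _ := by
              have e : (2:ℝ) ^ ((γ - β) / 2 * l) =
                  2 ^ (-((β + γ) / 2 * l)) * 2 ^ (γ * l) := by
                rw [← Real.rpow_add (by norm_num)]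
                congr 1; ring
              rw [e]
              simp only [x]
              ring
      _ = _ := by
          rw [← Finset.mul_sum, Finset.sum_add_distrib, ← Finset.mul_sum, ← hS]
          ring
end

section
/- In the antithetic Milstein setting, for every real p ≥ 2 there exists a constant K_p, depending only on p, T, f and g, such that for every N ≥ 1 (with Δt = T/N), E[ max_{0 ≤ n ≤ N} ‖X^f_n − X^a_n‖^p ] ≤ K_p · Δt^{p/2}. -/
open MeasureTheory ProbabilityTheory

/-- `h_{ijk}(x) = ½ ∑_l g_{lj}(x) ∂g_{ik}/∂x_l (x)`. -/
noncomputable def milsteinH {d m : ℕ} (g : (Fin d → ℝ) → Fin d → Fin m → ℝ)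
    (x : Fin d → ℝ) (i : Fin d) (j k : Fin m) : ℝ :=
  1 / 2 * ∑ l : Fin d, g x l j * fderiv ℝ (fun y => g y i k) x (Pi.single l 1)

/-- One step of the Milstein scheme with the Lévy areas omitted:
`x_i ↦ x_i + f_i(x) dt + ∑_j g_{ij}(x) dw_j + ∑_{j,k} h_{ijk}(x)(dw_j dw_k − δ_{jk} dt)`. -/
noncomputable def milsteinStep {d m : ℕ} (f : (Fin d → ℝ) → Fin d → ℝ)
    (g : (Fin d → ℝ) → Fin d → Fin m → ℝ) (dt : ℝ)
    (x : Fin d → ℝ) (dw : Fin m → ℝ) : Fin d → ℝ :=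
  fun i => x i + f x i * dt + (∑ j : Fin m, g x i j * dw j)
    + ∑ j : Fin m, ∑ k : Fin m,
        milsteinH g x i j k * (dw j * dw k - if j = k then dt else 0)


namespace AMil

/-- all moments finite -/
def AM {Ω : Type} {mΩ : MeasurableSpace Ω} (μ : Measure Ω) (Y : Ω → ℝ) : Prop :=
  Measurable Y ∧ ∀ n : ℕ, Integrable (fun ω => |Y ω| ^ n) μ

section am
variable {Ω : Type} {mΩ : MeasurableSpace Ω} {μ : Measure Ω}

lemma AM.of_le {Y Z : Ω → ℝ} (hY : Measurable Y) (hZ : AM μ Z) (h : ∀ ω, |Y ω| ≤ |Z ω|) :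
    AM μ Y := by
  refine ⟨hY, fun n => ?_⟩
  refine (hZ.2 n).mono' ((hY.abs.pow_const n).aestronglyMeasurable) (Filter.Eventually.of_forall fun ω => ?_)
  rw [Real.norm_eq_abs, abs_pow, abs_abs]
  exact pow_le_pow_left₀ (abs_nonneg _) (h ω) n

lemma AM.integrable {Y : Ω → ℝ} (hY : AM μ Y) : Integrable Y μ := by
  refine (hY.2 1).mono' hY.1.aestronglyMeasurable (Filter.Eventually.of_forall fun ω => ?_)
  simp

lemma AM.const [IsProbabilityMeasure μ] (c : ℝ) : AM μ (fun _ => c) :=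
  ⟨measurable_const, fun _ => integrable_const _⟩

lemma AM.abs {Y : Ω → ℝ} (hY : AM μ Y) : AM μ (fun ω => |Y ω|) :=
  AM.of_le hY.1.abs hY (fun ω => by simp)

lemma AM.add {Y Z : Ω → ℝ} (hY : AM μ Y) (hZ : AM μ Z) : AM μ (fun ω => Y ω + Z ω) := by
  refine ⟨hY.1.add hZ.1, fun n => ?_⟩
  refine (((hY.2 n).add (hZ.2 n)).const_mul (2 ^ (n - 1))).mono'
    (((hY.1.add hZ.1).abs.pow_const n).aestronglyMeasurable) (Filter.Eventually.of_forall fun ω => ?_)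
  rw [Real.norm_eq_abs, abs_pow, abs_abs]
  exact (pow_le_pow_left₀ (abs_nonneg _) (abs_add_le _ _) n).trans
    (add_pow_le (abs_nonneg _) (abs_nonneg _) n)

lemma AM.pow {Y : Ω → ℝ} (hY : AM μ Y) (k : ℕ) : AM μ (fun ω => Y ω ^ k) := by
  refine ⟨hY.1.pow_const k, fun n => ?_⟩
  have := hY.2 (k * n)
  simpa only [abs_pow, pow_mul] using this

lemma AM.mul {Y Z : Ω → ℝ} (hY : AM μ Y) (hZ : AM μ Z) : AM μ (fun ω => Y ω * Z ω) := by
  refine AM.of_le (hY.1.mul hZ.1) ((hY.pow 2).add (hZ.pow 2)) (fun ω => ?_)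
  rw [abs_mul, abs_of_nonneg (add_nonneg (sq_nonneg (Y ω)) (sq_nonneg (Z ω))), ← sq_abs (Y ω), ← sq_abs (Z ω)]
  nlinarith [sq_nonneg (|Y ω| - |Z ω|), abs_nonneg (Y ω), abs_nonneg (Z ω), sq_nonneg (|Y ω| + |Z ω|)]

lemma AM.const_mul {Y : Ω → ℝ} (hY : AM μ Y) (c : ℝ) : AM μ (fun ω => c * Y ω) := by
  refine ⟨hY.1.const_mul c, fun n => ?_⟩
  simpa only [abs_mul, mul_pow] using (hY.2 n).const_mul (|c| ^ n)

lemma AM.mul_const {Y : Ω → ℝ} (hY : AM μ Y) (c : ℝ) : AM μ (fun ω => Y ω * c) := by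
  simpa only [mul_comm] using hY.const_mul c

lemma AM.neg {Y : Ω → ℝ} (hY : AM μ Y) : AM μ (fun ω => - Y ω) := by
  simpa using hY.const_mul (-1)

lemma AM.sub {Y Z : Ω → ℝ} (hY : AM μ Y) (hZ : AM μ Z) : AM μ (fun ω => Y ω - Z ω) := by
  simpa only [sub_eq_add_neg] using hY.add hZ.neg

lemma AM.sum [IsProbabilityMeasure μ] {ι : Type*} (s : Finset ι) {Y : ι → Ω → ℝ} (hY : ∀ i ∈ s, AM μ (Y i)) :
    AM μ (fun ω => ∑ i ∈ s, Y i ω) := by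
  classical
  induction s using Finset.induction_on with
  | empty => simpa using AM.const (μ := μ) 0
  | insert a s ha ih =>
    simp only [Finset.sum_insert ha]
    exact (hY a (by simp)).add (ih fun i hi => hY i (by simp [hi]))

lemma AM.congr {Y Z : Ω → ℝ} (hY : AM μ Y) (h : ∀ ω, Y ω = Z ω) : AM μ Z := by
  have : Y = Z := funext h
  exact this ▸ hY

end am

/-! scalar inequalities -/

lemma le_one_add_pow {r : ℕ} (hr : 1 ≤ r) (y : ℝ) : |y| ≤ 1 + y ^ (2 * r) := by
  rw [← Even.pow_abs (even_two_mul r)]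
  have h0 := abs_nonneg y
  rcases le_total |y| 1 with h | h
  · have := pow_nonneg h0 (2 * r); linarith
  · have := le_self_pow₀ h (n := 2 * r) (by omega); linarith

lemma sum_pow_le {ι : Type*} (s : Finset ι) (y : ι → ℝ) {r : ℕ} (hr : 1 ≤ r) :
    (∑ i ∈ s, y i) ^ (2 * r) ≤ ((s.card : ℝ) + 1) ^ (2 * r) * ∑ i ∈ s, y i ^ (2 * r) := by
  obtain ⟨k, hk⟩ : ∃ k, 2 * r = k + 1 := ⟨2 * r - 1, by omega⟩
  have hev : ∀ z : ℝ, |z| ^ (k + 1) = z ^ (k + 1) := fun z => by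
    rw [← hk]; exact Even.pow_abs (even_two_mul r) z
  rw [hk]
  rcases s.eq_empty_or_nonempty with rfl | hs
  · simp
  have h := pow_sum_div_card_le_sum_pow (s := s) (f := fun i => |y i|) (fun _ _ => abs_nonneg _) k
  have hc : (1:ℝ) ≤ s.card := by exact_mod_cast hs.card_pos
  rw [div_le_iff₀ (by positivity)] at h
  simp only [hev] at h
  have h0 : 0 ≤ ∑ i ∈ s, y i ^ (k + 1) := Finset.sum_nonneg fun i _ => by
    rw [← hev]; positivity
  calc (∑ i ∈ s, y i) ^ (k + 1) = |∑ i ∈ s, y i| ^ (k + 1) := (hev _).symm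
    _ ≤ (∑ i ∈ s, |y i|) ^ (k + 1) :=
      pow_le_pow_left₀ (abs_nonneg _) (Finset.abs_sum_le_sum_abs _ _) _
    _ ≤ _ := h
    _ = (s.card : ℝ) ^ k * ∑ i ∈ s, y i ^ (k + 1) := mul_comm _ _
    _ ≤ _ := by
      gcongr
      calc (s.card : ℝ) ^ k ≤ ((s.card : ℝ) + 1) ^ k := by gcongr; linarith
        _ ≤ _ := pow_le_pow_right₀ (by linarith) (by omega)

lemma add_pow_le' (x y : ℝ) (r : ℕ) :
    (x + y) ^ (2 * r) ≤ 4 ^ r * (x ^ (2 * r) + y ^ (2 * r)) := by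
  have h := add_pow_le (abs_nonneg x) (abs_nonneg y) (2 * r)
  rw [Even.pow_abs (even_two_mul r), Even.pow_abs (even_two_mul r)] at h
  have h1 : (x + y) ^ (2 * r) ≤ (|x| + |y|) ^ (2 * r) := by
    rw [← Even.pow_abs (even_two_mul r)]
    exact pow_le_pow_left₀ (abs_nonneg _) (abs_add_le _ _) _
  have h2 : (2:ℝ) ^ (2 * r - 1) ≤ 4 ^ r := by
    rw [show (4:ℝ) = 2 ^ 2 by norm_num, ← pow_mul]
    exact pow_le_pow_right₀ (by norm_num) (by omega)
  have h3 : 0 ≤ x ^ (2 * r) + y ^ (2 * r) :=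
    add_nonneg ((even_two_mul r).pow_nonneg _) ((even_two_mul r).pow_nonneg _)
  nlinarith

lemma taylor (n : ℕ) (x y : ℝ) :
    |(x + y) ^ (n + 2) - x ^ (n + 2) - (n + 2) * x ^ (n + 1) * y|
      ≤ (n + 2) ^ 2 * y ^ 2 * (|x| + |y|) ^ n := by
  induction n with
  | zero =>
    norm_num
    have : (x + y) ^ 2 - x ^ 2 - 2 * x * y = y ^ 2 := by ring
    rw [this, abs_of_nonneg (sq_nonneg _)]; nlinarith [sq_nonneg y]
  | succ n ih =>
    have e : (x + y) ^ (n + 1 + 2) - x ^ (n + 1 + 2) - ((n + 1 : ℕ) + 2) * x ^ (n + 1 + 1) * y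
      = (x + y) * ((x + y) ^ (n + 2) - x ^ (n + 2) - (n + 2) * x ^ (n + 1) * y)
        + (n + 2) * x ^ (n + 1) * y ^ 2 := by push_cast; ring
    rw [e]
    set s := |x| + |y| with hs
    have hs0 : 0 ≤ s := by positivity
    have h1 : |x + y| ≤ s := abs_add_le _ _
    have h2 : |x| ^ (n + 1) ≤ s ^ (n + 1) := pow_le_pow_left₀ (abs_nonneg _) (by simp [hs]) _
    calc _ ≤ |(x + y) * ((x + y) ^ (n + 2) - x ^ (n + 2) - (n + 2) * x ^ (n + 1) * y)|
        + |(n + 2) * x ^ (n + 1) * y ^ 2| := abs_add_le _ _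
      _ ≤ s * ((n + 2) ^ 2 * y ^ 2 * s ^ n) + (n + 2) * s ^ (n + 1) * y ^ 2 := by
        rw [abs_mul, abs_mul, abs_mul, abs_pow, abs_pow, sq_abs, abs_of_nonneg (by positivity : (0:ℝ) ≤ n + 2)]
        gcongr
      _ = ((n + 2) ^ 2 + (n + 2)) * y ^ 2 * s ^ (n + 1) := by ring
      _ ≤ _ := by
        gcongr; push_cast; nlinarith [(Nat.cast_nonneg n : (0:ℝ) ≤ n)]

lemma base_ineq (r : ℕ) (hr : 1 ≤ r) (T : ℝ) : ∃ C : ℝ, 0 ≤ C ∧ ∀ δ : ℝ, 0 < δ → δ ≤ T →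
    ∀ x a b : ℝ, (x + a + b) ^ (2 * r) ≤ x ^ (2 * r) + 2 * r * (x ^ (2 * r - 1) * b)
      + C * δ * (x ^ (2 * r) + a ^ (2 * r) / δ ^ (2 * r) + b ^ (2 * r) / δ ^ r) := by
  obtain ⟨k, rfl⟩ : ∃ k, r = k + 1 := ⟨r - 1, by omega⟩
  rcases le_or_gt T 0 with hT | hT
  · exact ⟨0, le_rfl, fun δ h1 h2 => by linarith⟩
  -- constant
  set B : ℝ := (1 + T) with hB
  refine ⟨(2 * (k + 1 : ℕ) + (2 * k + 2) ^ 2 * (2 * B) * B ^ (2 * k)) * (3 + 1) ^ (2 * (k + 1)), by positivity, ?_⟩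
  intro δ hδ hδT x a b
  set s := Real.sqrt δ with hs
  have hs2 : s ^ 2 = δ := Real.sq_sqrt hδ.le
  have hspos : 0 < s := Real.sqrt_pos.mpr hδ
  obtain ⟨α, rfl⟩ : ∃ α, a = δ * α := ⟨a / δ, by field_simp⟩
  obtain ⟨β, rfl⟩ : ∃ β, b = s * β := ⟨b / s, by field_simp⟩
  have ea : (δ * α) ^ (2 * (k + 1)) / δ ^ (2 * (k + 1)) = α ^ (2 * (k + 1)) := by
    rw [mul_pow]; field_simp
  have eb : (s * β) ^ (2 * (k + 1)) / δ ^ (k + 1) = β ^ (2 * (k + 1)) := by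
    rw [mul_pow, pow_mul s, hs2]; field_simp
  rw [ea, eb]
  set u := |x| + |α| + |β| with hu
  have hu0 : 0 ≤ u := by positivity
  have hsB : s ≤ B := by nlinarith [sq_nonneg (s - 1)]
  have hup : u ^ (2 * (k + 1)) ≤ (3 + 1) ^ (2 * (k + 1)) *
      (x ^ (2 * (k + 1)) + α ^ (2 * (k + 1)) + β ^ (2 * (k + 1))) := by
    have := sum_pow_le (Finset.univ) ![|x|, |α|, |β|] hr
    simpa [Fin.sum_univ_three, Even.pow_abs (even_two_mul (k + 1))] using this
  have ht := taylor (2 * k) x (δ * α + s * β)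
  have ht' := (abs_le.mp ht).2
  have hy : |δ * α + s * β| ≤ B * (|α| + |β|) := by
    calc _ ≤ |δ * α| + |s * β| := abs_add_le _ _
      _ = δ * |α| + s * |β| := by rw [abs_mul, abs_mul, abs_of_pos hδ, abs_of_pos hspos]
      _ ≤ B * |α| + B * |β| := by gcongr; linarith
      _ = _ := by ring
  have hxs : |x| + |δ * α + s * β| ≤ B * u := by
    have : |x| ≤ B * |x| := le_mul_of_one_le_left (abs_nonneg _) (by linarith)
    calc _ ≤ B * |x| + B * (|α| + |β|) := by gcongr
      _ = _ := by rw [hu]; ring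
  have hy2 : (δ * α + s * β) ^ 2 ≤ δ * (2 * B) * u ^ 2 := by
    have h1 : (δ * α + s * β) ^ 2 ≤ 2 * ((δ * α) ^ 2 + (s * β) ^ 2) := by
      nlinarith [sq_nonneg (δ * α - s * β)]
    have h2 : (δ * α) ^ 2 + (s * β) ^ 2 = δ * (δ * α ^ 2 + β ^ 2) := by
      rw [mul_pow s, hs2]; ring
    have h3 : δ * α ^ 2 + β ^ 2 ≤ B * (α ^ 2 + β ^ 2) := by
      nlinarith [sq_nonneg α, sq_nonneg β]
    have h4 : α ^ 2 + β ^ 2 ≤ u ^ 2 := by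
      rw [← sq_abs α, ← sq_abs β, hu]
      nlinarith [abs_nonneg x, abs_nonneg α, abs_nonneg β, mul_nonneg (abs_nonneg x) (abs_nonneg α), mul_nonneg (abs_nonneg x) (abs_nonneg β), mul_nonneg (abs_nonneg α) (abs_nonneg β)]
    calc _ ≤ 2 * (δ * (δ * α ^ 2 + β ^ 2)) := by rw [← h2]; exact h1
      _ ≤ 2 * (δ * (B * u ^ 2)) := by gcongr; exact h3.trans (by gcongr)
      _ = _ := by ring
  have hrem : (2 * k + 2) ^ 2 * (δ * α + s * β) ^ 2 * (|x| + |δ * α + s * β|) ^ (2 * k)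
      ≤ δ * ((2 * k + 2) ^ 2 * (2 * B) * B ^ (2 * k)) * u ^ (2 * (k + 1)) := by
    calc _ ≤ (2 * k + 2) ^ 2 * (δ * (2 * B) * u ^ 2) * (B * u) ^ (2 * k) := by gcongr
      _ = _ := by rw [mul_pow]; ring
  have hlin : x ^ (2 * k + 1) * (δ * α) ≤ δ * u ^ (2 * (k + 1)) := by
    calc _ ≤ |x ^ (2 * k + 1) * (δ * α)| := le_abs_self _
      _ = δ * (|x| ^ (2 * k + 1) * |α|) := by
        rw [abs_mul, abs_mul, abs_pow, abs_of_pos hδ]; ring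
      _ ≤ δ * (u ^ (2 * k + 1) * u) := by
        gcongr
        · rw [hu]; linarith [abs_nonneg α, abs_nonneg β]
        · rw [hu]; linarith [abs_nonneg x, abs_nonneg β]
      _ = _ := by ring
  have e1 : 2 * (k + 1) - 1 = 2 * k + 1 := by omega
  rw [e1, show x + δ * α + s * β = x + (δ * α + s * β) by ring]
  push_cast at ht' hup ⊢
  have e2 : 2 * (k + 1) = 2 * k + 2 := by ring
  rw [e2] at hup hrem hlin ⊢
  set Q : ℝ := (2 * k + 2) ^ 2 * (2 * B) * B ^ (2 * k) with hQ
  have hQ0 : 0 ≤ Q := by positivity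
  have key : (x + (δ * α + s * β)) ^ (2 * k + 2) ≤ x ^ (2 * k + 2) + (2 * k + 2) * (x ^ (2 * k + 1) * (s * β))
     + δ * (2 * (k + 1) + Q) * u ^ (2 * k + 2) := by
    have hl := mul_le_mul_of_nonneg_left hlin (by positivity : (0:ℝ) ≤ 2 * k + 2)
    linear_combination ht' + hrem + hl
  have key2 : δ * (2 * (k + 1) + Q) * u ^ (2 * k + 2) ≤ δ * (2 * (k + 1) + Q) * ((3 + 1) ^ (2 * k + 2) *
      (x ^ (2 * k + 2) + α ^ (2 * k + 2) + β ^ (2 * k + 2))) := by gcongr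
  linarith

/-- Young with exact constants -/
lemma young (n : ℕ) (a b : ℝ) (ha : 0 ≤ a) (hb : 0 ≤ b) :
    (n + 1) * (a * b ^ n) ≤ a ^ (n + 1) + n * b ^ (n + 1) := by
  induction n with
  | zero => simp
  | succ n ih =>
    have h : 0 ≤ (a ^ (n + 1) - b ^ (n + 1)) * (a - b) := by
      rcases le_total a b with h | h
      · exact mul_nonneg_of_nonpos_of_nonpos (sub_nonpos.mpr (pow_le_pow_left₀ ha h _)) (by linarith)
      · exact mul_nonneg (sub_nonneg.mpr (pow_le_pow_left₀ hb h _)) (by linarith)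
    have h2 := mul_le_mul_of_nonneg_right ih hb
    push_cast
    have e1 : a ^ (n + 1 + 1) = a ^ (n + 1) * a := by ring
    have e2 : b ^ (n + 1 + 1) = b ^ (n + 1) * b := by ring
    have e3 : a * b ^ (n + 1) = a * b ^ n * b := by ring
    have e4 : b ^ (n + 1) = b ^ n * b := by ring
    nlinarith

/-- discrete Gronwall -/
lemma gronwall (N : ℕ) (v : ℕ → ℝ) (c e : ℝ) (hc : 0 ≤ c) (he : 0 ≤ e) (hv0 : 0 ≤ v 0)
    (h : ∀ n < N, v (n + 1) ≤ (1 + c) * v n + e) (n : ℕ) (hn : n ≤ N) :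
    v n ≤ Real.exp (N * c) * (v 0 + N * e) := by
  have key : ∀ n ≤ N, v n ≤ (1 + c) ^ n * (v 0 + n * e) := by
    intro n
    induction n with
    | zero => simp
    | succ n ih =>
      intro hn
      have h1 := h n (by omega)
      have h2 := ih (by omega)
      have h3 := mul_le_mul_of_nonneg_left h2 (by linarith : 0 ≤ 1 + c)
      have h4 : 1 ≤ (1 + c) ^ (n + 1) := one_le_pow₀ (by linarith)
      have h5 : e ≤ (1 + c) ^ (n + 1) * e := le_mul_of_one_le_left he h4
      push_cast
      have e1 : (1 + c) ^ (n + 1) * (v 0 + (n + 1) * e) = (1 + c) * ((1 + c) ^ n * (v 0 + n * e)) + (1 + c) ^ (n + 1) * e := by ring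
      linarith
  refine (key n hn).trans ?_
  have h1 : (1 + c) ^ n ≤ Real.exp (N * c) := by
    calc (1 + c) ^ n ≤ (Real.exp c) ^ n := pow_le_pow_left₀ (by linarith) (by linarith [Real.add_one_le_exp c]) _
      _ = Real.exp (n * c) := by rw [← Real.exp_nat_mul]
      _ ≤ _ := Real.exp_le_exp.mpr (by gcongr)
  have : (n:ℝ) ≤ N := by exact_mod_cast hn
  gcongr

end AMil

namespace AMil

section moments
variable {Ω : Type} {mΩ : MeasurableSpace Ω} {μ : Measure Ω}

/-- the `2r`-th moment -/
noncomputable def E2 (μ : Measure Ω) (r : ℕ) (Y : Ω → ℝ) : ℝ := ∫ ω, Y ω ^ (2 * r) ∂μ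

/-- sum of `2r`-th moments of the coordinates -/
noncomputable def EV {d : ℕ} (μ : Measure Ω) (r : ℕ) (X : Ω → Fin d → ℝ) : ℝ :=
  ∑ i, E2 μ r (fun ω => X ω i)

/-- sum of `2r`-th powers of coordinates -/
def vs {d : ℕ} (r : ℕ) (x : Fin d → ℝ) : ℝ := ∑ i, x i ^ (2 * r)

lemma E2_nonneg (r : ℕ) (Y : Ω → ℝ) : 0 ≤ E2 μ r Y :=
  integral_nonneg fun _ => (even_two_mul r).pow_nonneg _

lemma EV_nonneg {d : ℕ} (r : ℕ) (X : Ω → Fin d → ℝ) : 0 ≤ EV μ r X :=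
  Finset.sum_nonneg fun _ _ => E2_nonneg _ _

lemma EV_eq {d : ℕ} (r : ℕ) {X : Ω → Fin d → ℝ} (hX : ∀ i, AM μ (fun ω => X ω i)) :
    ∫ ω, vs r (X ω) ∂μ = EV μ r X := by
  unfold vs EV E2
  exact integral_finsetSum _ fun i _ => ((hX i).pow (2 * r)).integrable

lemma E2_mono (r : ℕ) {Y Z : Ω → ℝ} (hZ : AM μ Z)
    (h : ∀ ω, |Y ω| ≤ |Z ω|) : E2 μ r Y ≤ E2 μ r Z := by
  refine integral_mono_of_nonneg (Filter.Eventually.of_forall fun _ => (even_two_mul r).pow_nonneg _)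
    (hZ.pow _).integrable (Filter.Eventually.of_forall fun ω => ?_)
  dsimp only
  rw [← Even.pow_abs (even_two_mul r), ← Even.pow_abs (even_two_mul r) (Z ω)]
  exact pow_le_pow_left₀ (abs_nonneg _) (h ω) _

lemma E2_add (r : ℕ) {Y Z : Ω → ℝ} (hY : AM μ Y) (hZ : AM μ Z) :
    E2 μ r (fun ω => Y ω + Z ω) ≤ 4 ^ r * (E2 μ r Y + E2 μ r Z) := by
  unfold E2
  rw [← integral_add (hY.pow _).integrable (hZ.pow _).integrable, ← integral_const_mul]
  exact integral_mono ((hY.add hZ).pow _).integrable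
    (((hY.pow _).add (hZ.pow _)).const_mul _).integrable fun ω => add_pow_le' _ _ _

lemma E2_neg (r : ℕ) (Y : Ω → ℝ) : E2 μ r (fun ω => - Y ω) = E2 μ r Y := by
  unfold E2
  simp only [Even.neg_pow (even_two_mul r)]

lemma E2_sub (r : ℕ) {Y Z : Ω → ℝ} (hY : AM μ Y) (hZ : AM μ Z) :
    E2 μ r (fun ω => Y ω - Z ω) ≤ 4 ^ r * (E2 μ r Y + E2 μ r Z) := by
  simpa only [sub_eq_add_neg, E2_neg] using E2_add r hY hZ.neg

lemma E2_mul_const (r : ℕ) (Y : Ω → ℝ) (c : ℝ) :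
    E2 μ r (fun ω => Y ω * c) = E2 μ r Y * c ^ (2 * r) := by
  unfold E2
  simp only [mul_pow, integral_mul_const]

lemma E2_sum [IsProbabilityMeasure μ] {ι : Type*} (s : Finset ι) {r : ℕ} (hr : 1 ≤ r)
    {Y : ι → Ω → ℝ} (hY : ∀ i ∈ s, AM μ (Y i)) :
    E2 μ r (fun ω => ∑ i ∈ s, Y i ω) ≤ ((s.card : ℝ) + 1) ^ (2 * r) * ∑ i ∈ s, E2 μ r (Y i) := by
  unfold E2
  rw [← integral_finsetSum _ fun i hi => ((hY i hi).pow (2 * r)).integrable, ← integral_const_mul]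
  exact integral_mono ((AM.sum s hY).pow _).integrable
    ((AM.sum s fun i hi => (hY i hi).pow _).const_mul _).integrable fun ω => sum_pow_le _ _ hr

/-- orthogonal to the past -/
def MZ (μ : Measure Ω) (F : MeasurableSpace Ω) (b : Ω → ℝ) : Prop :=
  AM μ b ∧ ∀ Y : Ω → ℝ, Measurable[F] Y → AM μ Y → ∫ ω, Y ω * b ω ∂μ = 0

lemma MZ.add {F : MeasurableSpace Ω} {b b' : Ω → ℝ} (h : MZ μ F b) (h' : MZ μ F b') :
    MZ μ F (fun ω => b ω + b' ω) := by
  refine ⟨h.1.add h'.1, fun Y hY hY' => ?_⟩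
  simp only [mul_add]
  rw [integral_add (hY'.mul h.1).integrable (hY'.mul h'.1).integrable, h.2 Y hY hY', h'.2 Y hY hY',
    add_zero]

lemma MZ.neg {F : MeasurableSpace Ω} {b : Ω → ℝ} (h : MZ μ F b) :
    MZ μ F (fun ω => - b ω) := by
  refine ⟨h.1.neg, fun Y hY hY' => ?_⟩
  simp only [mul_neg]
  rw [integral_neg, h.2 Y hY hY', neg_zero]

lemma MZ.sub {F : MeasurableSpace Ω} {b b' : Ω → ℝ} (h : MZ μ F b) (h' : MZ μ F b') :
    MZ μ F (fun ω => b ω - b' ω) := by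
  simpa only [sub_eq_add_neg] using h.add h'.neg

lemma MZ.mono {F F' : MeasurableSpace Ω} (hF : F ≤ F') {b : Ω → ℝ} (h : MZ μ F' b) : MZ μ F b :=
  ⟨h.1, fun Y hY hY' => h.2 Y (hY.mono hF le_rfl) hY'⟩

lemma MZ.sum [IsProbabilityMeasure μ] {F : MeasurableSpace Ω} {ι : Type*} (s : Finset ι) {b : ι → Ω → ℝ}
    (h : ∀ i ∈ s, MZ μ F (b i)) : MZ μ F (fun ω => ∑ i ∈ s, b i ω) := by
  refine ⟨AM.sum s fun i hi => (h i hi).1, fun Y hY hY' => ?_⟩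
  simp only [Finset.mul_sum]
  rw [integral_finsetSum _ fun i hi => (hY'.mul (h i hi).1).integrable]
  exact Finset.sum_eq_zero fun i hi => (h i hi).2 Y hY hY'

structure IsNoise (μ : Measure Ω) (r : ℕ) (F : MeasurableSpace Ω) (ξ : Ω → ℝ) (v : ℝ) : Prop where
  mz : MZ μ F ξ
  mom : ∀ Y : Ω → ℝ, Measurable[F] Y → AM μ Y → E2 μ r (fun ω => Y ω * ξ ω) ≤ v * E2 μ r Y

lemma IsNoise.mono {r : ℕ} {F F' : MeasurableSpace Ω} (hF : F ≤ F') {ξ : Ω → ℝ} {v : ℝ}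
    (h : IsNoise μ r F' ξ v) : IsNoise μ r F ξ v :=
  ⟨h.mz.mono hF, fun Y hY hY' => h.mom Y (hY.mono hF le_rfl) hY'⟩

lemma IsNoise.mul {r : ℕ} {F : MeasurableSpace Ω} {ξ : Ω → ℝ} {v : ℝ} (h : IsNoise μ r F ξ v)
    {Y : Ω → ℝ} (hY : Measurable[F] Y) (hY' : AM μ Y) : MZ μ F (fun ω => Y ω * ξ ω) := by
  refine ⟨hY'.mul h.mz.1, fun Z hZ hZ' => ?_⟩
  simp only [← mul_assoc]
  exact h.mz.2 _ (hZ.mul hY) (hZ'.mul hY')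

noncomputable def kc (n r : ℕ) : ℝ := ((n : ℝ) + 1) ^ (2 * r) * n

lemma kc_nonneg (n r : ℕ) : 0 ≤ kc n r := by unfold kc; positivity

lemma noise_sum [IsProbabilityMeasure μ] {r : ℕ} (hr : 1 ≤ r) {F : MeasurableSpace Ω} {κ : Type*} [Fintype κ]
    {ξ Y : κ → Ω → ℝ} {v B : ℝ} (hv : 0 ≤ v)
    (hξ : ∀ k, IsNoise μ r F (ξ k) v) (hY : ∀ k, Measurable[F] (Y k)) (hY' : ∀ k, AM μ (Y k))
    (hB : ∀ k, E2 μ r (Y k) ≤ B) :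
    MZ μ F (fun ω => ∑ k, Y k ω * ξ k ω) ∧
      E2 μ r (fun ω => ∑ k, Y k ω * ξ k ω) ≤ kc (Fintype.card κ) r * (v * B) := by
  refine ⟨MZ.sum _ fun k _ => (hξ k).mul (hY k) (hY' k), ?_⟩
  refine (E2_sum _ hr fun k _ => ((hY' k).mul (hξ k).mz.1)).trans ?_
  unfold kc
  rw [mul_assoc, Finset.card_univ]
  gcongr
  calc _ ≤ ∑ k : κ, v * B := Finset.sum_le_sum fun k _ =>
        ((hξ k).mom _ (hY k) (hY' k)).trans (mul_le_mul_of_nonneg_left (hB k) hv)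
    _ = _ := by simp

/-- coefficient assumptions -/
structure Coef {d m : ℕ} (r : ℕ) (L : ℝ) (f : (Fin d → ℝ) → Fin d → ℝ)
    (g : (Fin d → ℝ) → Fin d → Fin m → ℝ) (H : (Fin d → ℝ) → Fin d → Fin m → Fin m → ℝ) : Prop where
  L0 : 0 ≤ L
  fc : ∀ i, Continuous fun x => f x i
  gc : ∀ i j, Continuous fun x => g x i j
  Hc : ∀ i j k, Continuous fun x => H x i j k
  fl : ∀ i x y, (f x i - f y i) ^ (2 * r) ≤ L * vs r (fun l => x l - y l)
  gl : ∀ i j x y, (g x i j - g y i j) ^ (2 * r) ≤ L * vs r (fun l => x l - y l)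
  fg : ∀ i x, (f x i) ^ (2 * r) ≤ L * (1 + vs r x)
  gg : ∀ i j x, (g x i j) ^ (2 * r) ≤ L * (1 + vs r x)
  Hg : ∀ i j k x, (H x i j k) ^ (2 * r) ≤ L * (1 + vs r x)

lemma growth_comp [IsProbabilityMeasure μ] {d r : ℕ} (hr : 1 ≤ r) {L : ℝ}
    {G : (Fin d → ℝ) → ℝ}
    (hG : Continuous G) (hg : ∀ x, (G x) ^ (2 * r) ≤ L * (1 + vs r x)) {X : Ω → Fin d → ℝ}
    (hX : ∀ i, AM μ (fun ω => X ω i)) :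
    AM μ (fun ω => G (X ω)) ∧ E2 μ r (fun ω => G (X ω)) ≤ L * (1 + EV μ r X) := by
  have hvs : AM μ (fun ω => vs r (X ω)) := AM.sum _ fun i _ => (hX i).pow _
  have hm : Measurable X := measurable_pi_iff.mpr fun i => (hX i).1
  have h1 : AM μ (fun ω => G (X ω)) := by
    refine AM.of_le (hG.measurable.comp hm) ((AM.const 1).add (((AM.const 1).add hvs).const_mul L)) fun ω => ?_
    exact (le_one_add_pow hr _).trans ((by linarith [hg (X ω)] : _ ≤ 1 + L * (1 + vs r (X ω))).trans (le_abs_self _))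
  refine ⟨h1, ?_⟩
  have : L * (1 + EV μ r X) = ∫ ω, L * (1 + vs r (X ω)) ∂μ := by
    rw [integral_const_mul, integral_add (integrable_const _) hvs.integrable, EV_eq r hX]; simp
  rw [this]
  exact integral_mono (h1.pow _).integrable (((AM.const 1).add hvs).const_mul L).integrable fun ω => hg _

lemma lip_comp [IsProbabilityMeasure μ] {d r : ℕ} {L : ℝ}
    {G : (Fin d → ℝ) → ℝ} (hg : ∀ x y, (G x - G y) ^ (2 * r) ≤ L * vs r (fun l => x l - y l))
    {X Y : Ω → Fin d → ℝ}
    (hX : ∀ i, AM μ (fun ω => X ω i)) (hY : ∀ i, AM μ (fun ω => Y ω i))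
    (hGX : AM μ (fun ω => G (X ω))) (hGY : AM μ (fun ω => G (Y ω))) :
    E2 μ r (fun ω => G (X ω) - G (Y ω)) ≤ L * EV μ r (fun ω i => X ω i - Y ω i) := by
  have hD : ∀ i, AM μ (fun ω => X ω i - Y ω i) := fun i => (hX i).sub (hY i)
  have hvs : AM μ (fun ω => vs r (fun i => X ω i - Y ω i)) := AM.sum _ fun i _ => (hD i).pow _
  rw [← EV_eq r hD, ← integral_const_mul]
  exact integral_mono ((hGX.sub hGY).pow _).integrable (hvs.const_mul L).integrable fun ω => hg _ _

lemma one_step (r : ℕ) (hr : 1 ≤ r) (T : ℝ) : ∃ C : ℝ, 0 ≤ C ∧ ∀ δ : ℝ, 0 < δ → δ ≤ T →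
    ∀ {Ω : Type} {mΩ : MeasurableSpace Ω} (μ : Measure Ω) (F : MeasurableSpace Ω) (x a b : Ω → ℝ),
      Measurable[F] x → AM μ x → AM μ a → MZ μ F b →
      E2 μ r (fun ω => x ω + a ω + b ω) ≤ E2 μ r x
        + C * δ * (E2 μ r x + E2 μ r a / δ ^ (2 * r) + E2 μ r b / δ ^ r) := by
  obtain ⟨C, hC, h⟩ := base_ineq r hr T
  refine ⟨C, hC, fun δ hδ hδT Ω _ μ F x a b hxF hx ha hb => ?_⟩
  have i1 := (hx.pow (2 * r)).integrable
  have i2 := (((hx.pow (2 * r - 1)).mul hb.1).const_mul (2 * r)).integrable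
  have i3 := ((ha.pow (2 * r)).mul_const (δ ^ (2 * r))⁻¹)
  have i4 := ((hb.1.pow (2 * r)).mul_const (δ ^ r)⁻¹)
  have i5 := ((((hx.pow (2 * r)).add i3).add i4).const_mul (C * δ)).integrable
  have e0 : ∫ ω, x ω ^ (2 * r - 1) * b ω ∂μ = 0 :=
    hb.2 _ (hxF.pow_const _) (hx.pow _)
  have e : E2 μ r x + C * δ * (E2 μ r x + E2 μ r a / δ ^ (2 * r) + E2 μ r b / δ ^ r)
    = ∫ ω, (x ω ^ (2 * r) + 2 * r * (x ω ^ (2 * r - 1) * b ω)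
      + C * δ * (x ω ^ (2 * r) + a ω ^ (2 * r) * (δ ^ (2 * r))⁻¹ + b ω ^ (2 * r) * (δ ^ r)⁻¹)) ∂μ := by
    have s1 := integral_add (i1.add i2) i5
    have s2 := integral_add i1 i2
    have s3 := integral_add ((hx.pow (2 * r)).add i3).integrable i4.integrable
    have s4 := integral_add (hx.pow (2 * r)).integrable i3.integrable
    simp only [Pi.add_apply] at s1
    rw [s1, s2, integral_const_mul, e0, integral_const_mul, s3, s4, integral_mul_const, integral_mul_const]
    unfold E2
    simp only [div_eq_mul_inv]; ring
  rw [e]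
  refine integral_mono (((hx.add ha).add hb.1).pow _).integrable ((i1.add i2).add i5) fun ω => ?_
  simpa only [div_eq_mul_inv] using h δ hδ hδT (x ω) (a ω) (b ω)

end moments
end AMil

namespace AMil

/-- one step of the scheme driven by abstract noise -/
structure Half {d m : ℕ} {Ω : Type} {mΩ : MeasurableSpace Ω} (μ : Measure Ω) (r : ℕ) (h c : ℝ)
    (f : (Fin d → ℝ) → Fin d → ℝ)
    (g : (Fin d → ℝ) → Fin d → Fin m → ℝ) (H : (Fin d → ℝ) → Fin d → Fin m → Fin m → ℝ)
    (F : MeasurableSpace Ω) (X X' : Ω → Fin d → ℝ) (ξ : Fin m → Ω → ℝ) (ζ : Fin m → Fin m → Ω → ℝ) :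
    Prop where
  XF : ∀ i, Measurable[F] (fun ω => X ω i)
  XA : ∀ i, AM μ (fun ω => X ω i)
  ξn : ∀ j, IsNoise μ r F (ξ j) (c * h ^ r)
  ζn : ∀ j k, IsNoise μ r F (ζ j k) (c * h ^ (2 * r))
  step : ∀ ω i, X' ω i = X ω i + f (X ω) i * h + (∑ j, g (X ω) i j * ξ j ω)
    + ∑ j, ∑ k, H (X ω) i j k * ζ j k ω

lemma comp_meas {d : ℕ} {Ω : Type} {F : MeasurableSpace Ω} {X : Ω → Fin d → ℝ}
    (hX : ∀ i, Measurable[F] (fun ω => X ω i)) {G : (Fin d → ℝ) → ℝ} (hG : Continuous G) :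
    Measurable[F] (fun ω => G (X ω)) :=
  hG.measurable.comp (measurable_pi_iff.mpr hX)

lemma hpow_le {h T : ℝ} (r : ℕ) (h0 : 0 < h) (hT : h ≤ T) : h ^ (2 * r) ≤ T ^ r * h ^ r := by
  rw [two_mul, pow_add]
  have := pow_le_pow_left₀ h0.le hT r
  gcongr

lemma double_noise {d m r : ℕ} (hr : 1 ≤ r) {c L h : ℝ} (hc : 0 ≤ c) (h0 : 0 < h)
    {f : (Fin d → ℝ) → Fin d → ℝ}
    {g : (Fin d → ℝ) → Fin d → Fin m → ℝ} {H : (Fin d → ℝ) → Fin d → Fin m → Fin m → ℝ}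
    (co : Coef r L f g H)
    {Ω : Type} {mΩ : MeasurableSpace Ω} {μ : Measure Ω} [IsProbabilityMeasure μ]
    {F : MeasurableSpace Ω} {X X' : Ω → Fin d → ℝ} {ξ : Fin m → Ω → ℝ} {ζ : Fin m → Fin m → Ω → ℝ}
    (hh : Half μ r h c f g H F X X' ξ ζ) (i : Fin d) :
    MZ μ F (fun ω => ∑ j, ∑ k, H (X ω) i j k * ζ j k ω) ∧
      E2 μ r (fun ω => ∑ j, ∑ k, H (X ω) i j k * ζ j k ω) ≤
        kc (m * m) r * (c * h ^ (2 * r) * (L * (1 + EV μ r X))) := by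
  have := noise_sum (κ := Fin m × Fin m) (μ := μ) hr (F := F) (ξ := fun q => ζ q.1 q.2)
    (Y := fun q ω => H (X ω) i q.1 q.2) (v := c * h ^ (2 * r)) (B := L * (1 + EV μ r X))
    (by positivity) (fun q => hh.ζn _ _) (fun q => comp_meas hh.XF (co.Hc _ _ _))
    (fun q => (growth_comp hr (co.Hc _ _ _) (co.Hg _ _ _) hh.XA).1)
    (fun q => (growth_comp hr (co.Hc _ _ _) (co.Hg _ _ _) hh.XA).2)
  simpa only [Fintype.sum_prod_type, Fintype.card_prod, Fintype.card_fin] using this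

lemma half_step (d m r : ℕ) (hr : 1 ≤ r) (T c L : ℝ) (hc : 0 ≤ c) (hT : 0 < T) :
    ∃ C : ℝ, 0 ≤ C ∧ ∀ h : ℝ, 0 < h → h ≤ T → ∀ (f : (Fin d → ℝ) → Fin d → ℝ)
    (g : (Fin d → ℝ) → Fin d → Fin m → ℝ) (H : (Fin d → ℝ) → Fin d → Fin m → Fin m → ℝ),
    Coef r L f g H → ∀ {Ω : Type} {_mΩ : MeasurableSpace Ω} (μ : Measure Ω) [IsProbabilityMeasure μ]
    (F : MeasurableSpace Ω) (X X' : Ω → Fin d → ℝ) (ξ : Fin m → Ω → ℝ) (ζ : Fin m → Fin m → Ω → ℝ),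
    Half μ r h c f g H F X X' ξ ζ →
    (∀ i, AM μ (fun ω => X' ω i)) ∧ EV μ r X' ≤ (1 + C * h) * EV μ r X + C * h ∧
    EV μ r (fun ω i => X' ω i - X ω i) ≤ C * h ^ r * (1 + EV μ r X) := by
  obtain ⟨C0, hC0, one⟩ := one_step r hr T
  by_cases hL : 0 ≤ L
  swap
  · exact ⟨0, le_rfl, fun h _ _ f g H co => absurd co.L0 hL⟩
  have k1 := kc_nonneg m r
  have k2 := kc_nonneg (m * m) r
  set K1 : ℝ := 4 ^ r * (kc m r * c * L + kc (m * m) r * c * T ^ r * L) with hK1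
  have hK10 : 0 ≤ K1 := by positivity
  refine ⟨C0 * (1 + d * (L + K1)) + d * (4 ^ r * (T ^ r * L + K1)), by positivity, ?_⟩
  intro h h0 hhT f g H co Ω mΩ μ _ F X X' ξ ζ hh
  set V := EV μ r X with hV
  have hV0 : 0 ≤ V := EV_nonneg _ _
  have hp := hpow_le r h0 hhT
  have fA := fun i => (growth_comp hr (co.fc i) (co.fg i) hh.XA)
  have aA := fun i => (fA i).1.mul_const h
  have aE : ∀ i, E2 μ r (fun ω => f (X ω) i * h) ≤ L * (1 + V) * h ^ (2 * r) := fun i => by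
    rw [E2_mul_const]; gcongr; exact (fA i).2
  have gN := fun i => noise_sum (κ := Fin m) (μ := μ) hr (F := F) (ξ := ξ)
    (Y := fun j ω => g (X ω) i j) (v := c * h ^ r) (B := L * (1 + V))
    (by positivity) (fun q => hh.ξn _) (fun q => comp_meas hh.XF (co.gc _ _))
    (fun q => (growth_comp hr (co.gc _ _) (co.gg _ _) hh.XA).1)
    (fun q => (growth_comp hr (co.gc _ _) (co.gg _ _) hh.XA).2)
  have HN := fun i => double_noise hr hc h0 co hh i
  have bM := fun i => (gN i).1.add (HN i).1
  have bE : ∀ i, E2 μ r (fun ω => (∑ j, g (X ω) i j * ξ j ω) + ∑ j, ∑ k, H (X ω) i j k * ζ j k ω)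
      ≤ K1 * h ^ r * (1 + V) := fun i => by
    refine (E2_add r (gN i).1.1 (HN i).1.1).trans ?_
    have e1 := (gN i).2
    have e2 := (HN i).2
    rw [Fintype.card_fin] at e1
    calc _ ≤ 4 ^ r * (kc m r * (c * h ^ r * (L * (1 + V)))
          + kc (m * m) r * (c * (T ^ r * h ^ r) * (L * (1 + V)))) := by
          gcongr; exact e2.trans (by gcongr)
      _ = _ := by rw [hK1]; ring
  have X'e : ∀ i, (fun ω => X' ω i) = fun ω => X ω i + f (X ω) i * h
      + ((∑ j, g (X ω) i j * ξ j ω) + ∑ j, ∑ k, H (X ω) i j k * ζ j k ω) := fun i => by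
    funext ω; rw [hh.step]; ring
  have X'A : ∀ i, AM μ (fun ω => X' ω i) := fun i => by
    rw [X'e]; exact ((hh.XA i).add (aA i)).add (bM i).1
  refine ⟨X'A, ?_, ?_⟩
  · have : ∀ i, E2 μ r (fun ω => X' ω i) ≤ E2 μ r (fun ω => X ω i)
        + C0 * h * (E2 μ r (fun ω => X ω i) + L * (1 + V) + K1 * (1 + V)) := fun i => by
      rw [X'e]
      refine (one h h0 hhT μ F _ _ _ (hh.XF i) (hh.XA i) (aA i) (bM i)).trans ?_
      gcongr
      · rw [div_le_iff₀ (by positivity)]; exact aE i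
      · rw [div_le_iff₀ (by positivity)]; linarith [bE i]
    calc EV μ r X' ≤ ∑ i, (E2 μ r (fun ω => X ω i)
        + C0 * h * (E2 μ r (fun ω => X ω i) + L * (1 + V) + K1 * (1 + V))) :=
          Finset.sum_le_sum fun i _ => this i
      _ = V + C0 * h * (V + d * (L + K1) * (1 + V)) := by
        rw [Finset.sum_add_distrib, ← Finset.mul_sum, Finset.sum_add_distrib, Finset.sum_add_distrib]
        simp only [Finset.sum_const, Finset.card_univ, Fintype.card_fin, nsmul_eq_mul]
        rw [hV]; unfold EV; ring
      _ ≤ V + C0 * h * ((1 + d * (L + K1)) * (1 + V)) := by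
        gcongr; nlinarith
      _ ≤ V + (C0 * (1 + d * (L + K1)) + d * (4 ^ r * (T ^ r * L + K1))) * h * (1 + V) := by
        have : 0 ≤ d * (4 ^ r * (T ^ r * L + K1)) * h * (1 + V) := by positivity
        linarith
      _ = _ := by ring
  · have : ∀ i, E2 μ r (fun ω => X' ω i - X ω i) ≤ 4 ^ r * (T ^ r * L + K1) * h ^ r * (1 + V) := fun i => by
      have e : (fun ω => X' ω i - X ω i) = fun ω => f (X ω) i * h
        + ((∑ j, g (X ω) i j * ξ j ω) + ∑ j, ∑ k, H (X ω) i j k * ζ j k ω) := by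
        funext ω; rw [hh.step]; ring
      rw [e]
      refine (E2_add r (aA i) (bM i).1).trans ?_
      calc _ ≤ 4 ^ r * (L * (1 + V) * (T ^ r * h ^ r) + K1 * h ^ r * (1 + V)) := by
            gcongr
            · exact (aE i).trans (by gcongr)
            · exact bE i
        _ = _ := by ring
    calc _ ≤ ∑ i : Fin d, 4 ^ r * (T ^ r * L + K1) * h ^ r * (1 + V) :=
          Finset.sum_le_sum fun i _ => this i
      _ = d * (4 ^ r * (T ^ r * L + K1)) * h ^ r * (1 + V) := by simp; ring
      _ ≤ _ := by
        have : 0 ≤ C0 * (1 + d * (L + K1)) * h ^ r * (1 + V) := by positivity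
        linarith

lemma double_step (d m r : ℕ) (hr : 1 ≤ r) (T c L : ℝ) (hc : 0 ≤ c) (hT : 0 < T) :
    ∃ C : ℝ, 0 ≤ C ∧ ∀ h : ℝ, 0 < h → h ≤ T → ∀ (f : (Fin d → ℝ) → Fin d → ℝ)
    (g : (Fin d → ℝ) → Fin d → Fin m → ℝ) (H : (Fin d → ℝ) → Fin d → Fin m → Fin m → ℝ),
    Coef r L f g H → ∀ {Ω : Type} {_mΩ : MeasurableSpace Ω} (μ : Measure Ω) [IsProbabilityMeasure μ]
    (F F1 : MeasurableSpace Ω) (X X' X'' : Ω → Fin d → ℝ) (ξ ξ' : Fin m → Ω → ℝ)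
    (ζ ζ' : Fin m → Fin m → Ω → ℝ), F ≤ F1 →
    Half μ r h c f g H F X X' ξ ζ → (∀ i, Measurable[F1] fun ω => X' ω i) →
    (∀ j, IsNoise μ r F1 (ξ' j) (c * h ^ r)) → (∀ j k, IsNoise μ r F1 (ζ' j k) (c * h ^ (2 * r))) →
    (∀ ω i, X'' ω i = X' ω i + f (X' ω) i * h + (∑ j, g (X' ω) i j * ξ' j ω)
      + ∑ j, ∑ k, H (X' ω) i j k * ζ' j k ω) →
    (∀ i, AM μ (fun ω => X'' ω i)) ∧ EV μ r X'' ≤ (1 + C * h) * EV μ r X + C * h ∧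
    ∃ R M : Ω → Fin d → ℝ,
      (∀ ω i, X'' ω i = X ω i + f (X ω) i * (2 * h) + (∑ j, g (X ω) i j * ξ j ω)
        + (∑ j, g (X ω) i j * ξ' j ω) + R ω i + M ω i) ∧
      (∀ i, AM μ (fun ω => R ω i)) ∧ (∀ i, Measurable[F1] (fun ω => R ω i)) ∧
      (∀ i, MZ μ F (fun ω => M ω i)) ∧
      (∀ i, E2 μ r (fun ω => R ω i) ≤ C * h ^ (3 * r) * (1 + EV μ r X)) ∧
      (∀ i, E2 μ r (fun ω => M ω i) ≤ C * h ^ (2 * r) * (1 + EV μ r X)) := by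
  obtain ⟨C, hC, half⟩ := half_step d m r hr T c L hc hT
  by_cases hL : 0 ≤ L
  swap
  · exact ⟨0, le_rfl, fun h _ _ f g H co => absurd co.L0 hL⟩
  have k1 := kc_nonneg m r
  have k2 := kc_nonneg (m * m) r
  set P : ℝ := 4 ^ r * (4 ^ r * (kc (m * m) r * c * L + kc m r * c * L * C)
    + kc (m * m) r * c * L * ((1 + C * T) + C * T)) with hP
  have hP0 : 0 ≤ P := by positivity
  set Q : ℝ := C * (2 + C * T) with hQ
  have hQ0 : 0 ≤ Q := by positivity
  refine ⟨Q + L * C + P, by positivity, ?_⟩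
  intro h h0 hhT f g H co Ω mΩ μ _ F F1 X X' X'' ξ ξ' ζ ζ' hFF hh X'F hξ' hζ' st
  obtain ⟨X'A, X'V, X'D⟩ := half h h0 hhT f g H co μ F X X' ξ ζ hh
  have hh' : Half μ r h c f g H F1 X' X'' ξ' ζ' := ⟨X'F, X'A, hξ', hζ', st⟩
  obtain ⟨X''A, X''V, -⟩ := half h h0 hhT f g H co μ F1 X' X'' ξ' ζ' hh'
  set V := EV μ r X with hV
  have hV0 : 0 ≤ V := EV_nonneg _ _
  have XF1 : ∀ i, Measurable[F1] (fun ω => X ω i) := fun i => (hh.XF i).mono hFF le_rfl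
  refine ⟨X''A, ?_, ?_⟩
  · have h1 : EV μ r X'' ≤ (1 + C * h) * ((1 + C * h) * V + C * h) + C * h :=
      X''V.trans (by gcongr)
    have h2 : (1 + C * h) * ((1 + C * h) * V + C * h) + C * h
      = V + (C * (2 + C * h)) * h * (1 + V) := by ring
    have h3 : (C * (2 + C * h)) * h * (1 + V) ≤ Q * h * (1 + V) := by rw [hQ]; gcongr
    have h4 : 0 ≤ (L * C + P) * h * (1 + V) := by positivity
    linarith
  have gA := fun i j => (growth_comp hr (co.gc i j) (co.gg i j) hh.XA).1
  have gA' := fun i j => (growth_comp hr (co.gc i j) (co.gg i j) X'A).1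
  have fA := fun i => (growth_comp hr (co.fc i) (co.fg i) hh.XA).1
  have fA' := fun i => (growth_comp hr (co.fc i) (co.fg i) X'A).1
  have N1 := fun i => double_noise hr hc h0 co hh i
  have N2 := fun i => double_noise hr hc h0 co hh' i
  have N3 := fun i => noise_sum (κ := Fin m) (μ := μ) hr (F := F1) (ξ := ξ')
    (Y := fun j ω => g (X' ω) i j - g (X ω) i j) (v := c * h ^ r) (B := L * (C * h ^ r * (1 + V)))
    (by positivity) (fun q => hξ' _)
    (fun q => (comp_meas X'F (co.gc _ _)).sub (comp_meas XF1 (co.gc _ _)))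
    (fun q => (gA' _ _).sub (gA _ _))
    (fun q => (lip_comp (co.gl _ _) X'A hh.XA (gA' _ _) (gA _ _)).trans (by gcongr))
  refine ⟨fun ω i => (f (X' ω) i - f (X ω) i) * h,
    fun ω i => (∑ j, ∑ k, H (X ω) i j k * ζ j k ω) + (∑ j, (g (X' ω) i j - g (X ω) i j) * ξ' j ω)
      + ∑ j, ∑ k, H (X' ω) i j k * ζ' j k ω, ?_, ?_, ?_, ?_, ?_, ?_⟩
  · intro ω i
    rw [st, hh.step]
    simp only [sub_mul, Finset.sum_sub_distrib]
    ring
  · exact fun i => ((fA' i).sub (fA i)).mul_const h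
  · exact fun i => ((comp_meas X'F (co.fc _)).sub (comp_meas XF1 (co.fc _))).mul_const h
  · exact fun i => ((N1 i).1.add ((N3 i).1.mono hFF)).add ((N2 i).1.mono hFF)
  · intro i
    rw [E2_mul_const]
    calc _ ≤ L * (C * h ^ r * (1 + V)) * h ^ (2 * r) := by
          gcongr
          exact (lip_comp (co.fl _) X'A hh.XA (fA' _) (fA _)).trans (by gcongr)
      _ = (L * C) * h ^ (3 * r) * (1 + V) := by ring
      _ ≤ _ := by gcongr; linarith
  · intro i
    refine (E2_add r ((N1 i).1.1.add (N3 i).1.1) (N2 i).1.1).trans ?_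
    have e1 := E2_add r (N1 i).1.1 (N3 i).1.1
    have n1 := (N1 i).2
    have n2 := (N2 i).2
    have n3 := (N3 i).2
    rw [Fintype.card_fin] at n3
    have hV' : 1 + EV μ r X' ≤ ((1 + C * T) + C * T) * (1 + V) := by
      have : EV μ r X' ≤ (1 + C * T) * V + C * T := X'V.trans (by gcongr)
      have : 0 ≤ C * T * V := by positivity
      nlinarith [mul_nonneg hC hT.le]
    calc _ ≤ 4 ^ r * (4 ^ r * (kc (m * m) r * (c * h ^ (2 * r) * (L * (1 + V)))
            + kc m r * (c * h ^ r * (L * (C * h ^ r * (1 + V)))))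
            + kc (m * m) r * (c * h ^ (2 * r) * (L * (((1 + C * T) + C * T) * (1 + V))))) := by
          gcongr
          · exact e1.trans (by gcongr)
          · exact n2.trans (by gcongr)
      _ = P * h ^ (2 * r) * (1 + V) := by rw [hP]; ring
      _ ≤ _ := by gcongr; nlinarith [mul_nonneg hL hC]

end AMil

namespace AMil

lemma sum_pow_le' {ι : Type*} (s : Finset ι) (y : ι → ℝ) {r : ℕ} (hr : 1 ≤ r) :
    (∑ i ∈ s, |y i|) ^ (2 * r) ≤ (s.card : ℝ) ^ (2 * r - 1) * ∑ i ∈ s, y i ^ (2 * r) := by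
  obtain ⟨k, hk⟩ : ∃ k, 2 * r = k + 1 := ⟨2 * r - 1, by omega⟩
  have hev : ∀ z : ℝ, |z| ^ (k + 1) = z ^ (k + 1) := fun z => by
    rw [← hk]; exact Even.pow_abs (even_two_mul r) z
  rw [hk, Nat.add_sub_cancel]
  rcases s.eq_empty_or_nonempty with rfl | hs
  · simp
  have h := pow_sum_div_card_le_sum_pow (s := s) (f := fun i => |y i|) (fun _ _ => abs_nonneg _) k
  have hc : (1:ℝ) ≤ s.card := by exact_mod_cast hs.card_pos
  rw [div_le_iff₀ (by positivity)] at h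
  simp only [hev] at h
  rwa [mul_comm] at h

lemma E2_sum_abs {Ω : Type} {mΩ : MeasurableSpace Ω} {μ : Measure Ω} [IsProbabilityMeasure μ]
    (N : ℕ) {r : ℕ} (hr : 1 ≤ r) {Y : ℕ → Ω → ℝ} (hY : ∀ n < N, AM μ (Y n)) {B : ℝ}
    (hB : ∀ n < N, E2 μ r (Y n) ≤ B) :
    E2 μ r (fun ω => ∑ n ∈ Finset.range N, |Y n ω|) ≤ (N : ℝ) ^ (2 * r) * B := by
  have hY' : ∀ n ∈ Finset.range N, AM μ (Y n) := fun n hn => hY n (Finset.mem_range.mp hn)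
  have h1 : E2 μ r (fun ω => ∑ n ∈ Finset.range N, |Y n ω|)
      ≤ (N : ℝ) ^ (2 * r - 1) * ∑ n ∈ Finset.range N, E2 μ r (Y n) := by
    unfold E2
    rw [← integral_finsetSum _ fun i hi => ((hY' i hi).pow (2 * r)).integrable, ← integral_const_mul]
    refine integral_mono ((AM.sum _ fun i hi => (hY' i hi).abs).pow _).integrable
      ((AM.sum _ fun i hi => (hY' i hi).pow _).const_mul _).integrable fun ω => ?_
    simpa using sum_pow_le' (Finset.range N) (fun n => Y n ω) hr
  refine h1.trans ?_
  have h2 : ∑ n ∈ Finset.range N, E2 μ r (Y n) ≤ N * B := by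
    calc _ ≤ ∑ n ∈ Finset.range N, B := Finset.sum_le_sum fun n hn => hB n (Finset.mem_range.mp hn)
      _ = _ := by simp
  calc _ ≤ (N : ℝ) ^ (2 * r - 1) * (N * B) := by gcongr
    _ = (N : ℝ) ^ (2 * r - 1 + 1) * B := by ring
    _ = _ := by rw [show 2 * r - 1 + 1 = 2 * r by omega]

/-- running maximum -/
noncomputable def runMax {Ω : Type} (S : ℕ → Ω → ℝ) : ℕ → Ω → ℝ
  | 0 => fun ω => |S 0 ω|
  | n + 1 => fun ω => max (runMax S n ω) |S (n + 1) ω|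

/-- sign -/
noncomputable def sg (x : ℝ) : ℝ := if 0 ≤ x then 1 else -1

lemma sg_mul (x : ℝ) : sg x * x = |x| := by
  unfold sg; split_ifs with h
  · rw [abs_of_nonneg h, one_mul]
  · rw [abs_of_neg (not_le.mp h)]; ring

lemma sg_mul_le (x y : ℝ) : sg x * y ≤ |y| := by
  unfold sg; split_ifs with h
  · rw [one_mul]; exact le_abs_self _
  · linarith [neg_abs_le y]

lemma abs_sg (x : ℝ) : |sg x| = 1 := by
  unfold sg; split_ifs <;> simp

lemma measurable_sg : Measurable sg :=
  Measurable.ite measurableSet_Ici measurable_const measurable_const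

lemma runMax_le {Ω : Type} (S : ℕ → Ω → ℝ) (ω : Ω) {k n : ℕ} (h : k ≤ n) :
    |S k ω| ≤ runMax S n ω := by
  induction n with
  | zero => obtain rfl : k = 0 := by omega
            exact le_rfl
  | succ n ih =>
    rcases Nat.lt_or_ge n k with hk | hk
    · obtain rfl : k = n + 1 := by omega
      exact le_max_right _ _
    · exact (ih hk).trans (le_max_left _ _)

/-- pathwise Doob, one step -/
lemma doob_step' (n : ℕ) (M S b : ℝ) (hM : |S| ≤ M) (P : ℝ)
    (h : n * M ^ (n + 1) ≤ (n + 1) * (|S| * M ^ n) - (n + 1) * P) :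
    n * (max M |S + b|) ^ (n + 1) ≤ (n + 1) * (|S + b| * (max M |S + b|) ^ n)
      - (n + 1) * (P + M ^ n * sg S * b) := by
  have hM0 : 0 ≤ M := (abs_nonneg _).trans hM
  have h1 : |S| + sg S * b ≤ |S + b| := by
    rw [← sg_mul, ← mul_add]; exact sg_mul_le _ _
  have h2 := mul_le_mul_of_nonneg_right h1 (pow_nonneg hM0 n)
  have hn : (0:ℝ) ≤ n + 1 := by positivity
  have h3 := mul_le_mul_of_nonneg_left h2 hn
  rcases le_total |S + b| M with hc | hc
  · rw [max_eq_left hc]; nlinarith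
  · rw [max_eq_right hc]
    have := young n |S + b| M (abs_nonneg _) hM0
    have e : |S + b| * |S + b| ^ n = |S + b| ^ (n + 1) := by ring
    rw [e]
    nlinarith

lemma absorb (r : ℕ) (hr : 1 ≤ r) (S M : ℝ) (hM : 0 ≤ M) :
    2 * r * (|S| * M ^ (2 * r - 1)) ≤ 1 / 2 * M ^ (2 * r)
      + 2 * r * (4 * r) ^ (2 * r) * S ^ (2 * r) := by
  obtain ⟨k, hk⟩ : ∃ k, 2 * r = k + 1 := ⟨2 * r - 1, by omega⟩
  have hev : S ^ (2 * r) = |S| ^ (2 * r) := (Even.pow_abs (even_two_mul r) S).symm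
  have hr' : (1:ℝ) ≤ r := by exact_mod_cast hr
  have hr0 : (0:ℝ) < 2 * r := by positivity
  rw [hev, hk, Nat.add_sub_cancel]
  have h0 := abs_nonneg S
  rcases le_total (4 * r * |S|) M with h | h
  · have : 0 ≤ 2 * r * (4 * r) ^ (k + 1) * |S| ^ (k + 1) := by positivity
    have h2 := mul_le_mul_of_nonneg_right h (pow_nonneg hM k)
    have e : M ^ (k + 1) = M * M ^ k := by ring
    nlinarith
  · have h1 : M ^ k ≤ (4 * r * |S|) ^ k := pow_le_pow_left₀ hM h _
    have h2 : (0:ℝ) ≤ 1 / 2 * M ^ (k + 1) := by positivity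
    calc _ ≤ 2 * r * (|S| * (4 * r * |S|) ^ k) := by gcongr
      _ = 2 * r * (4 * r) ^ k * |S| ^ (k + 1) := by rw [mul_pow]; ring
      _ ≤ 2 * r * (4 * r) ^ (k + 1) * |S| ^ (k + 1) := by
        gcongr
        · linarith
        · omega
      _ ≤ _ := by linarith

lemma doob {Ω : Type} {mΩ : MeasurableSpace Ω} {μ : Measure Ω} [IsProbabilityMeasure μ]
    (r : ℕ) (hr : 1 ≤ r) (N : ℕ) (F : ℕ → MeasurableSpace Ω) (hF : Monotone F) (b : ℕ → Ω → ℝ)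
    (hb : ∀ n < N, MZ μ (F n) (b n)) (hbF : ∀ n < N, Measurable[F (n + 1)] (b n)) :
    ∃ M : Ω → ℝ, AM μ M ∧ (∀ n ≤ N, ∀ ω, |∑ k ∈ Finset.range n, b k ω| ≤ M ω) ∧
      E2 μ r M ≤ 2 * (2 * r * (4 * r) ^ (2 * r)) * E2 μ r (fun ω => ∑ k ∈ Finset.range N, b k ω) := by
  set S : ℕ → Ω → ℝ := fun n ω => ∑ k ∈ Finset.range n, b k ω with hS
  have SA : ∀ n ≤ N, AM μ (S n) := fun n hn =>
    AM.sum _ fun k hk => (hb k (by have := Finset.mem_range.mp hk; omega)).1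
  have SF : ∀ n ≤ N, Measurable[F n] (S n) := fun n hn => by
    refine Finset.measurable_fun_sum _ fun k hk => ?_
    have := Finset.mem_range.mp hk
    exact (hbF k (by omega)).mono (hF (by omega)) le_rfl
  have MF : ∀ n ≤ N, Measurable[F n] (runMax S n) := fun n => by
    induction n with
    | zero => intro hn; exact continuous_abs.measurable.comp (SF 0 hn)
    | succ n ih =>
      intro hn
      exact ((ih (by omega)).mono (hF (by omega)) le_rfl).max
        (continuous_abs.measurable.comp (SF (n + 1) hn))
  have M0 : ∀ n ω, 0 ≤ runMax S n ω := fun n ω => (abs_nonneg _).trans (runMax_le S ω le_rfl)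
  have MA : ∀ n ≤ N, AM μ (runMax S n) := fun n => by
    induction n with
    | zero => intro hn; exact (SA 0 hn).abs
    | succ n ih =>
      intro hn
      have h1 := ih (by omega)
      have h2 := (SA (n + 1) hn).abs
      refine AM.of_le (h1.1.max h2.1) (h1.add h2) fun ω => ?_
      have h3 := M0 n ω
      have h4 := abs_nonneg (S (n + 1) ω)
      change |max (runMax S n ω) (abs (S (n + 1) ω))| ≤ _
      rw [abs_of_nonneg (le_max_of_le_left h3), abs_of_nonneg (add_nonneg h3 h4)]
      exact max_le (by linarith) (by linarith)
  obtain ⟨q, hq⟩ : ∃ q, 2 * r = q + 1 := ⟨2 * r - 1, by omega⟩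
  have hq1 : (1:ℝ) ≤ q := by exact_mod_cast (by omega : 1 ≤ q)
  set P : ℕ → Ω → ℝ := fun n ω => ∑ k ∈ Finset.range n, runMax S k ω ^ q * sg (S k ω) * b k ω with hP
  have path : ∀ n ω, q * runMax S n ω ^ (q + 1)
      ≤ (q + 1) * (|S n ω| * runMax S n ω ^ q) - (q + 1) * P n ω := by
    intro n ω
    induction n with
    | zero => simp [hS, hP, runMax]
    | succ n ih =>
      have := doob_step' q (runMax S n ω) (S n ω) (b n ω) (runMax_le S ω le_rfl) (P n ω) ih
      have e1 : S (n + 1) ω = S n ω + b n ω := by simp only [hS, Finset.sum_range_succ]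
      have e2 : P (n + 1) ω = P n ω + runMax S n ω ^ q * sg (S n ω) * b n ω := by
        simp only [hP, Finset.sum_range_succ]
      rw [e2]
      simp only [runMax]
      rw [e1]; exact this
  have sgA : ∀ k < N, AM μ (fun ω => runMax S k ω ^ q * sg (S k ω)) := fun k hk => by
    refine AM.of_le ?_ ((MA k hk.le).pow q) fun ω => ?_
    · exact ((MA k hk.le).1.pow_const q).mul (measurable_sg.comp (SA k hk.le).1)
    · rw [abs_mul, abs_sg, mul_one]
  have PA : AM μ (P N) := AM.sum _ fun k hk => by
    have := Finset.mem_range.mp hk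
    exact (sgA k this).mul (hb k this).1
  have P0 : ∫ ω, P N ω ∂μ = 0 := by
    simp only [hP]
    rw [integral_finsetSum]
    · refine Finset.sum_eq_zero fun k hk => ?_
      have := Finset.mem_range.mp hk
      exact (hb k this).2 _ (((MF k this.le).pow_const q).mul (measurable_sg.comp (SF k this.le))) (sgA k this)
    · intro k hk
      have := Finset.mem_range.mp hk
      exact ((sgA k this).mul (hb k this).1).integrable
  refine ⟨runMax S N, MA N le_rfl, fun n hn ω => runMax_le S ω hn, ?_⟩
  have fin : ∀ ω, runMax S N ω ^ (2 * r) ≤ 2 * (2 * r * (4 * r) ^ (2 * r)) * S N ω ^ (2 * r)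
      - 2 * (q + 1) * P N ω := by
    intro ω
    have h1 := path N ω
    have h2 := absorb r hr (S N ω) (runMax S N ω) (M0 N ω)
    have h3 : (2 * r : ℝ) = q + 1 := by exact_mod_cast hq
    have h4 : 2 * r - 1 = q := by omega
    rw [h4, h3] at h2
    rw [h3]
    have h5 : 0 ≤ runMax S N ω ^ (q + 1) := pow_nonneg (M0 N ω) _
    rw [hq] at h2 ⊢
    nlinarith
  have i1 := (((SA N le_rfl).pow (2 * r)).const_mul (2 * (2 * r * (4 * r) ^ (2 * r)))).integrable
  have i2 := (PA.const_mul (2 * (q + 1))).integrable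
  have := integral_mono ((MA N le_rfl).pow (2 * r)).integrable (i1.sub i2) fin
  simp only [Pi.sub_apply] at this
  rw [integral_sub i1 i2, integral_const_mul, integral_const_mul, P0] at this
  unfold E2
  linarith

end AMil

namespace AMil

/-- a path of the scheme driven by abstract noise, two half steps per coarse step -/
structure Path {d m : ℕ} {Ω : Type} {mΩ : MeasurableSpace Ω} (μ : Measure Ω) (r : ℕ) (h c : ℝ)
    (f : (Fin d → ℝ) → Fin d → ℝ)
    (g : (Fin d → ℝ) → Fin d → Fin m → ℝ) (H : (Fin d → ℝ) → Fin d → Fin m → Fin m → ℝ)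
    (x₀ : Fin d → ℝ) (N : ℕ)
    (F F1 : ℕ → MeasurableSpace Ω) (X X' : ℕ → Ω → Fin d → ℝ) (ξ ξ' : ℕ → Fin m → Ω → ℝ)
    (ζ ζ' : ℕ → Fin m → Fin m → Ω → ℝ) : Prop where
  FF1 : ∀ n < N, F n ≤ F1 n
  F1F : ∀ n < N, F1 n ≤ F (n + 1)
  startAt : ∀ ω, X 0 ω = x₀
  XF : ∀ n ≤ N, ∀ i, Measurable[F n] (fun ω => X n ω i)
  X'F : ∀ n < N, ∀ i, Measurable[F1 n] (fun ω => X' n ω i)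
  ξn : ∀ n < N, ∀ j, IsNoise μ r (F n) (ξ n j) (c * h ^ r)
  ζn : ∀ n < N, ∀ j k, IsNoise μ r (F n) (ζ n j k) (c * h ^ (2 * r))
  ξn' : ∀ n < N, ∀ j, IsNoise μ r (F1 n) (ξ' n j) (c * h ^ r)
  ζn' : ∀ n < N, ∀ j k, IsNoise μ r (F1 n) (ζ' n j k) (c * h ^ (2 * r))
  step : ∀ n < N, ∀ ω i, X' n ω i = X n ω i + f (X n ω) i * h + (∑ j, g (X n ω) i j * ξ n j ω)
    + ∑ j, ∑ k, H (X n ω) i j k * ζ n j k ω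
  step' : ∀ n < N, ∀ ω i, X (n + 1) ω i = X' n ω i + f (X' n ω) i * h
    + (∑ j, g (X' n ω) i j * ξ' n j ω) + ∑ j, ∑ k, H (X' n ω) i j k * ζ' n j k ω

lemma path_bound (d m r : ℕ) (hr : 1 ≤ r) (T c L : ℝ) (hc : 0 ≤ c) (hT : 0 < T) (x₀ : Fin d → ℝ) :
    ∃ C : ℝ, 0 ≤ C ∧ ∀ h : ℝ, 0 < h → h ≤ T → ∀ N : ℕ, N * h ≤ T → ∀ (f : (Fin d → ℝ) → Fin d → ℝ)
    (g : (Fin d → ℝ) → Fin d → Fin m → ℝ) (H : (Fin d → ℝ) → Fin d → Fin m → Fin m → ℝ),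
    Coef r L f g H → ∀ {Ω : Type} {_mΩ : MeasurableSpace Ω} (μ : Measure Ω) [IsProbabilityMeasure μ]
    (F F1 : ℕ → MeasurableSpace Ω) (X X' : ℕ → Ω → Fin d → ℝ) (ξ ξ' : ℕ → Fin m → Ω → ℝ)
    (ζ ζ' : ℕ → Fin m → Fin m → Ω → ℝ), Path μ r h c f g H x₀ N F F1 X X' ξ ξ' ζ ζ' →
    (∀ n ≤ N, ∀ i, AM μ (fun ω => X n ω i)) ∧ 
    ∀ n < N, ∃ R M : Ω → Fin d → ℝ,
      (∀ ω i, X (n + 1) ω i = X n ω i + f (X n ω) i * (2 * h) + (∑ j, g (X n ω) i j * ξ n j ω)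
        + (∑ j, g (X n ω) i j * ξ' n j ω) + R ω i + M ω i) ∧
      (∀ i, AM μ (fun ω => R ω i)) ∧ (∀ i, Measurable[F (n + 1)] (fun ω => R ω i)) ∧
      (∀ i, MZ μ (F n) (fun ω => M ω i)) ∧
      (∀ i, E2 μ r (fun ω => R ω i) ≤ C * h ^ (3 * r)) ∧
      (∀ i, E2 μ r (fun ω => M ω i) ≤ C * h ^ (2 * r)) := by
  obtain ⟨C, hC, dbl⟩ := double_step d m r hr T c L hc hT
  have hvs : 0 ≤ vs r x₀ := Finset.sum_nonneg fun _ _ => (even_two_mul r).pow_nonneg _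
  set B : ℝ := Real.exp (C * T) * (vs r x₀ + C * T) with hB
  have hB0 : 0 ≤ B := by positivity
  refine ⟨C * (1 + B), by positivity, ?_⟩
  intro h h0 hhT N hNT f g H co Ω mΩ μ _ F F1 X X' ξ ξ' ζ ζ' hp
  have D := fun n (hn : n < N) (hA : ∀ i, AM μ (fun ω => X n ω i)) =>
    dbl h h0 hhT f g H co μ (F n) (F1 n) (X n) (X' n) (X (n + 1)) (ξ n) (ξ' n) (ζ n) (ζ' n)
      (hp.FF1 n hn) ⟨hp.XF n hn.le, hA, hp.ξn n hn, hp.ζn n hn, hp.step n hn⟩ (hp.X'F n hn)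
      (hp.ξn' n hn) (hp.ζn' n hn) (hp.step' n hn)
  have XA : ∀ n ≤ N, ∀ i, AM μ (fun ω => X n ω i) := by
    intro n
    induction n with
    | zero => intro _ i; simp only [hp.startAt]; exact AM.const _
    | succ n ih => intro hn; exact (D n (by omega) (ih (by omega))).1
  have V0 : EV μ r (X 0) = vs r x₀ := by
    rw [← EV_eq r (XA 0 (by omega))]; simp only [hp.startAt]; simp
  have VB : ∀ n ≤ N, EV μ r (X n) ≤ B := by
    intro n hn
    have := gronwall N (fun n => EV μ r (X n)) (C * h) (C * h) (by positivity) (by positivity)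
      (EV_nonneg _ _) (fun n hn => (D n hn (XA n hn.le)).2.1) n hn
    refine this.trans ?_
    rw [V0, hB]
    have e : (N:ℝ) * (C * h) ≤ C * T := by nlinarith
    gcongr
  refine ⟨XA, fun n hn => ?_⟩
  obtain ⟨R, M, h1, h2, h3, h4, h5, h6⟩ := (D n hn (XA n hn.le)).2.2
  refine ⟨R, M, h1, h2, fun i => (h3 i).mono (hp.F1F n hn) le_rfl, h4, fun i => (h5 i).trans ?_,
    fun i => (h6 i).trans ?_⟩
  · have := VB n hn.le
    calc _ ≤ C * h ^ (3 * r) * (1 + B) := by gcongr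
      _ = _ := by ring
  · have := VB n hn.le
    calc _ ≤ C * h ^ (2 * r) * (1 + B) := by gcongr
      _ = _ := by ring

/-- the difference of the two paths -/
lemma pair_step (d m r : ℕ) (hr : 1 ≤ r) (T c L : ℝ) (hc : 0 ≤ c) (hT : 0 < T) (x₀ : Fin d → ℝ) :
    ∃ C : ℝ, 0 ≤ C ∧ ∀ h : ℝ, 0 < h → h ≤ T → ∀ N : ℕ, N * h ≤ T → ∀ (f : (Fin d → ℝ) → Fin d → ℝ)
    (g : (Fin d → ℝ) → Fin d → Fin m → ℝ) (H : (Fin d → ℝ) → Fin d → Fin m → Fin m → ℝ),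
    Coef r L f g H → ∀ {Ω : Type} {_mΩ : MeasurableSpace Ω} (μ : Measure Ω) [IsProbabilityMeasure μ]
    (F F1 F2 : ℕ → MeasurableSpace Ω) (X X' Y Y' : ℕ → Ω → Fin d → ℝ) (ξ ξ' : ℕ → Fin m → Ω → ℝ)
    (ζ ζ' : ℕ → Fin m → Fin m → Ω → ℝ), Monotone F → Path μ r h c f g H x₀ N F F1 X X' ξ ξ' ζ ζ' →
    Path μ r h c f g H x₀ N F F2 Y Y' ξ' ξ ζ' ζ →
    (∀ n ≤ N, ∀ i, AM μ (fun ω => X n ω i - Y n ω i)) ∧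
    ∀ n < N, ∃ a b : Ω → Fin d → ℝ,
      (∀ ω i, X (n + 1) ω i - Y (n + 1) ω i = X n ω i - Y n ω i + a ω i + b ω i) ∧
      (∀ i, AM μ (fun ω => a ω i)) ∧ (∀ i, Measurable[F (n + 1)] (fun ω => a ω i)) ∧
      (∀ i, MZ μ (F n) (fun ω => b ω i)) ∧
      (∀ i, E2 μ r (fun ω => a ω i) ≤
        C * h ^ (2 * r) * (EV μ r (fun ω i => X n ω i - Y n ω i) + h ^ r)) ∧
      (∀ i, E2 μ r (fun ω => b ω i) ≤
        C * h ^ r * (EV μ r (fun ω i => X n ω i - Y n ω i) + h ^ r)) := by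
  obtain ⟨C, hC, pb⟩ := path_bound d m r hr T c L hc hT x₀
  by_cases hL : 0 ≤ L
  swap
  · exact ⟨0, le_rfl, fun h _ _ N _ f g H co => absurd co.L0 hL⟩
  have k1 := kc_nonneg m r
  set Ca : ℝ := 4 ^ r * (L * 2 ^ (2 * r) + 4 ^ r * (C + C)) with hCa
  set Cb : ℝ := 4 ^ r * (4 ^ r * (kc m r * c * L + kc m r * c * L) + 4 ^ r * (C + C)) with hCb
  have hCa0 : 0 ≤ Ca := by positivity
  have hCb0 : 0 ≤ Cb := by positivity
  refine ⟨Ca + Cb, by positivity, ?_⟩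
  intro h h0 hhT N hNT f g H co Ω mΩ μ _ F F1 F2 X X' Y Y' ξ ξ' ζ ζ' hF hX hY
  obtain ⟨XA, XS⟩ := pb h h0 hhT N hNT f g H co μ _ _ _ _ _ _ _ _ hX
  obtain ⟨YA, YS⟩ := pb h h0 hhT N hNT f g H co μ _ _ _ _ _ _ _ _ hY
  refine ⟨fun n hn i => (XA n hn i).sub (YA n hn i), fun n hn => ?_⟩
  obtain ⟨R, M, x1, x2, x3, x4, x5, x6⟩ := XS n hn
  obtain ⟨R', M', y1, y2, y3, y4, y5, y6⟩ := YS n hn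
  set V := EV μ r (fun ω i => X n ω i - Y n ω i) with hV
  have hV0 : 0 ≤ V := EV_nonneg _ _
  have XAn := XA n hn.le
  have YAn := YA n hn.le
  have fX := fun i => (growth_comp hr (co.fc i) (co.fg i) XAn).1
  have fY := fun i => (growth_comp hr (co.fc i) (co.fg i) YAn).1
  have gX := fun i j => (growth_comp hr (co.gc i j) (co.gg i j) XAn).1
  have gY := fun i j => (growth_comp hr (co.gc i j) (co.gg i j) YAn).1
  have XF := hX.XF n hn.le
  have YF := hY.XF n hn.le
  have XF' : ∀ i, Measurable[F (n + 1)] (fun ω => X n ω i) :=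
    fun i => (XF i).mono (hF (Nat.le_succ n)) le_rfl
  have YF' : ∀ i, Measurable[F (n + 1)] (fun ω => Y n ω i) :=
    fun i => (YF i).mono (hF (Nat.le_succ n)) le_rfl
  have N1 := fun i => noise_sum (κ := Fin m) (μ := μ) hr (F := F n) (ξ := ξ n)
    (Y := fun j ω => g (X n ω) i j - g (Y n ω) i j) (v := c * h ^ r) (B := L * V)
    (by positivity) (fun q => hX.ξn n hn _)
    (fun q => (comp_meas XF (co.gc _ _)).sub (comp_meas YF (co.gc _ _)))
    (fun q => (gX _ _).sub (gY _ _))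
    (fun q => (lip_comp (co.gl _ _) XAn YAn (gX _ _) (gY _ _)))
  have N2 := fun i => noise_sum (κ := Fin m) (μ := μ) hr (F := F n) (ξ := ξ' n)
    (Y := fun j ω => g (X n ω) i j - g (Y n ω) i j) (v := c * h ^ r) (B := L * V)
    (by positivity) (fun q => hY.ξn n hn _)
    (fun q => (comp_meas XF (co.gc _ _)).sub (comp_meas YF (co.gc _ _)))
    (fun q => (gX _ _).sub (gY _ _))
    (fun q => (lip_comp (co.gl _ _) XAn YAn (gX _ _) (gY _ _)))
  simp only [Fintype.card_fin] at N1 N2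
  refine ⟨fun ω i => (f (X n ω) i - f (Y n ω) i) * (2 * h) + (R ω i - R' ω i),
    fun ω i => ((∑ j, (g (X n ω) i j - g (Y n ω) i j) * ξ n j ω)
      + ∑ j, (g (X n ω) i j - g (Y n ω) i j) * ξ' n j ω) + (M ω i - M' ω i), ?_, ?_, ?_, ?_, ?_, ?_⟩
  · intro ω i
    rw [x1, y1]
    simp only [sub_mul, Finset.sum_sub_distrib]
    ring
  · exact fun i => (((fX i).sub (fY i)).mul_const _).add ((x2 i).sub (y2 i))
  · exact fun i => (((comp_meas XF' (co.fc _)).sub (comp_meas YF' (co.fc _))).mul_const _).add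
      ((x3 i).sub (y3 i))
  · exact fun i => ((N1 i).1.add (N2 i).1).add ((x4 i).sub (y4 i))
  · intro i
    refine (E2_add r (((fX i).sub (fY i)).mul_const _) ((x2 i).sub (y2 i))).trans ?_
    have e1 := E2_sub r (x2 i) (y2 i)
    have e2 := lip_comp (co.fl i) XAn YAn (fX _) (fY _)
    rw [E2_mul_const]
    have := x5 i
    have := y5 i
    calc _ ≤ 4 ^ r * (L * V * (2 * h) ^ (2 * r) + 4 ^ r * (C * h ^ (3 * r) + C * h ^ (3 * r))) := by
          gcongr
          exact e1.trans (by gcongr)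
      _ = 4 ^ r * (L * 2 ^ (2 * r)) * h ^ (2 * r) * V + 4 ^ r * (4 ^ r * (C + C)) * h ^ (2 * r) * h ^ r := by
          rw [mul_pow]; ring
      _ ≤ Ca * h ^ (2 * r) * V + Ca * h ^ (2 * r) * h ^ r := by
          rw [hCa]
          gcongr
          · exact le_add_of_nonneg_right (by positivity)
          · exact le_add_of_nonneg_left (by positivity)
      _ = Ca * h ^ (2 * r) * (V + h ^ r) := by ring
      _ ≤ _ := by gcongr; linarith
  · intro i
    refine (E2_add r ((N1 i).1.1.add (N2 i).1.1) ((x4 i).1.sub (y4 i).1)).trans ?_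
    have e1 := E2_sub r (x4 i).1 (y4 i).1
    have e2 := E2_add r (N1 i).1.1 (N2 i).1.1
    have := x6 i
    have := y6 i
    have n1 := (N1 i).2
    have n2 := (N2 i).2
    calc _ ≤ 4 ^ r * (4 ^ r * (kc m r * (c * h ^ r * (L * V)) + kc m r * (c * h ^ r * (L * V)))
            + 4 ^ r * (C * h ^ (2 * r) + C * h ^ (2 * r))) := by
          gcongr
          · exact e2.trans (by gcongr)
          · exact e1.trans (by gcongr)
      _ = 4 ^ r * (4 ^ r * (kc m r * c * L + kc m r * c * L)) * h ^ r * V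
          + 4 ^ r * (4 ^ r * (C + C)) * h ^ r * h ^ r := by
          ring
      _ ≤ Cb * h ^ r * V + Cb * h ^ r * h ^ r := by
          rw [hCb]
          gcongr
          · exact le_add_of_nonneg_right (by positivity)
          · exact le_add_of_nonneg_left (by positivity)
      _ = Cb * h ^ r * (V + h ^ r) := by ring
      _ ≤ _ := by gcongr; linarith

lemma pair_bound (d m r : ℕ) (hr : 1 ≤ r) (T c L : ℝ) (hc : 0 ≤ c) (hT : 0 < T) (x₀ : Fin d → ℝ) :
    ∃ C : ℝ, 0 ≤ C ∧ ∀ h : ℝ, 0 < h → h ≤ T → ∀ N : ℕ, N * h ≤ T → ∀ (f : (Fin d → ℝ) → Fin d → ℝ)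
    (g : (Fin d → ℝ) → Fin d → Fin m → ℝ) (H : (Fin d → ℝ) → Fin d → Fin m → Fin m → ℝ),
    Coef r L f g H → ∀ {Ω : Type} {_mΩ : MeasurableSpace Ω} (μ : Measure Ω) [IsProbabilityMeasure μ]
    (F F1 F2 : ℕ → MeasurableSpace Ω) (X X' Y Y' : ℕ → Ω → Fin d → ℝ) (ξ ξ' : ℕ → Fin m → Ω → ℝ)
    (ζ ζ' : ℕ → Fin m → Fin m → Ω → ℝ), Monotone F → Path μ r h c f g H x₀ N F F1 X X' ξ ξ' ζ ζ' →
    Path μ r h c f g H x₀ N F F2 Y Y' ξ' ξ ζ' ζ →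
    ∃ Z : Fin d → Ω → ℝ, (∀ i, AM μ (Z i)) ∧ (∀ i, ∀ n ≤ N, ∀ ω, |X n ω i - Y n ω i| ≤ Z i ω) ∧
      ∀ i, E2 μ r (Z i) ≤ C * h ^ r := by
  obtain ⟨C, hC, ps⟩ := pair_step d m r hr T c L hc hT x₀
  obtain ⟨C0, hC0, one⟩ := one_step r hr T
  set C1 : ℝ := C0 * (1 + 2 * d * C) with hC1
  have hC10 : 0 ≤ C1 := by positivity
  set B : ℝ := Real.exp (C1 * T) * (C1 * T) with hB
  have hB0 : 0 ≤ B := by positivity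
  set A : ℝ := T ^ (2 * r) * (C * (B + 1)) with hA
  have hA0 : 0 ≤ A := by positivity
  set Q : ℝ := 2 * (2 * r * (4 * r) ^ (2 * r)) with hQ
  have hQ0 : 0 ≤ Q := by positivity
  refine ⟨4 ^ r * (A + Q * (4 ^ r * (B + A))), by positivity, ?_⟩
  intro h h0 hhT N hNT f g H co Ω mΩ μ _ F F1 F2 X X' Y Y' ξ ξ' ζ ζ' hF hX hY
  obtain ⟨DA, st⟩ := ps h h0 hhT N hNT f g H co μ _ _ _ _ _ _ _ _ _ _ _ hF hX hY
  choose! a b s1 s2 s3 s4 s5 s6 using st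
  set D : ℕ → Ω → Fin d → ℝ := fun n ω i => X n ω i - Y n ω i with hD
  have DF : ∀ n ≤ N, ∀ i, Measurable[F n] (fun ω => D n ω i) := fun n hn i =>
    (hX.XF n hn i).sub (hY.XF n hn i)
  have D0 : ∀ ω i, D 0 ω i = 0 := fun ω i => by simp only [hD, hX.startAt, hY.startAt, sub_self]
  have V0 : EV μ r (D 0) = 0 := by
    unfold EV E2
    simp only [D0]
    refine Finset.sum_eq_zero fun i _ => ?_
    rw [zero_pow (by omega)]; simp
  have Vstep : ∀ n < N, EV μ r (D (n + 1)) ≤ (1 + C1 * h) * EV μ r (D n) + C1 * h * h ^ r := by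
    intro n hn
    set V := EV μ r (D n) with hV
    have hV0 : 0 ≤ V := EV_nonneg _ _
    have : ∀ i, E2 μ r (fun ω => D (n + 1) ω i) ≤ E2 μ r (fun ω => D n ω i)
        + C0 * h * (E2 μ r (fun ω => D n ω i) + C * (V + h ^ r) + C * (V + h ^ r)) := fun i => by
      have e : (fun ω => D (n + 1) ω i) = fun ω => D n ω i + a n ω i + b n ω i :=
        funext fun ω => s1 n hn ω i
      rw [e]
      refine (one h h0 hhT μ (F n) _ _ _ (DF n hn.le i) (DA n hn.le i) (s2 n hn i) (s4 n hn i)).trans ?_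
      gcongr
      · rw [div_le_iff₀ (by positivity)]; have := s5 n hn i; linarith
      · rw [div_le_iff₀ (by positivity)]; have := s6 n hn i; linarith
    calc EV μ r (D (n + 1)) ≤ ∑ i, (E2 μ r (fun ω => D n ω i)
        + C0 * h * (E2 μ r (fun ω => D n ω i) + C * (V + h ^ r) + C * (V + h ^ r))) :=
          Finset.sum_le_sum fun i _ => this i
      _ = V + C0 * h * (V + 2 * d * C * (V + h ^ r)) := by
        rw [Finset.sum_add_distrib, ← Finset.mul_sum, Finset.sum_add_distrib, Finset.sum_add_distrib]
        simp only [Finset.sum_const, Finset.card_univ, Fintype.card_fin, nsmul_eq_mul]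
        rw [hV]; unfold EV; ring
      _ ≤ V + C0 * h * (1 * (V + h ^ r) + 2 * d * C * (V + h ^ r)) := by
        gcongr; have : 0 < h ^ r := by positivity
        linarith
      _ = _ := by rw [hC1]; ring
  have VB : ∀ n ≤ N, EV μ r (D n) ≤ B * h ^ r := by
    intro n hn
    have := gronwall N (fun n => EV μ r (D n)) (C1 * h) (C1 * h * h ^ r) (by positivity) (by positivity)
      (EV_nonneg _ _) Vstep n hn
    refine this.trans ?_
    rw [V0, hB, zero_add]
    have e : (N:ℝ) * (C1 * h) ≤ C1 * T := by nlinarith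
    calc _ = Real.exp (N * (C1 * h)) * ((N * (C1 * h)) * h ^ r) := by ring
      _ ≤ Real.exp (C1 * T) * ((C1 * T) * h ^ r) := by gcongr
      _ = _ := by ring
  have aE : ∀ i, E2 μ r (fun ω => ∑ n ∈ Finset.range N, |a n ω i|) ≤ A * h ^ r := fun i => by
    have := E2_sum_abs (μ := μ) N hr (Y := fun n ω => a n ω i) (B := C * h ^ (2 * r) * (B * h ^ r + h ^ r))
      (fun n hn => s2 n hn i) (fun n hn => (s5 n hn i).trans (by gcongr; exact VB n hn.le))
    refine this.trans ?_
    have e : ((N:ℝ) * h) ^ (2 * r) ≤ T ^ (2 * r) := pow_le_pow_left₀ (by positivity) hNT _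
    calc _ = ((N:ℝ) * h) ^ (2 * r) * (C * (B + 1)) * h ^ r := by rw [mul_pow]; ring
      _ ≤ T ^ (2 * r) * (C * (B + 1)) * h ^ r := by gcongr
  have aA : ∀ i, AM μ (fun ω => ∑ n ∈ Finset.range N, |a n ω i|) := fun i =>
    AM.sum _ fun n hn => (s2 n (Finset.mem_range.mp hn) i).abs
  have bF : ∀ i, ∀ n < N, Measurable[F (n + 1)] (fun ω => b n ω i) := fun i n hn => by
    have e : (fun ω => b n ω i) = fun ω => D (n + 1) ω i - D n ω i - a n ω i := by
      funext ω; have := s1 n hn ω i; simp only [hD]; linarith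
    rw [e]
    exact ((DF (n + 1) hn i).sub ((DF n hn.le i).mono (hF (Nat.le_succ n)) le_rfl)).sub (s3 n hn i)
  have dec : ∀ n ≤ N, ∀ ω i, D n ω i = ∑ k ∈ Finset.range n, a k ω i + ∑ k ∈ Finset.range n, b k ω i := by
    intro n
    induction n with
    | zero => intro _ ω i; simp [D0]
    | succ n ih =>
      intro hn ω i
      have h1 := s1 n (by omega) ω i
      have h2 := ih (by omega) ω i
      rw [Finset.sum_range_succ, Finset.sum_range_succ]
      simp only [hD] at h2 ⊢
      rw [h1, h2]; ring
  have absA : ∀ n ≤ N, ∀ ω i, |∑ k ∈ Finset.range n, a k ω i| ≤ ∑ k ∈ Finset.range N, |a k ω i| := by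
    intro n hn ω i
    exact (Finset.abs_sum_le_sum_abs _ _).trans (Finset.sum_le_sum_of_subset_of_nonneg
      (Finset.range_mono hn) fun _ _ _ => abs_nonneg _)
  have M := fun i => doob (μ := μ) r hr N F hF (fun n ω => b n ω i) (fun n hn => s4 n hn i) (bF i)
  choose M M1 M2 M3 using M
  refine ⟨fun i ω => (∑ n ∈ Finset.range N, |a n ω i|) + M i ω, fun i => (aA i).add (M1 i), ?_, ?_⟩
  · intro i n hn ω
    have := dec n hn ω i
    simp only [hD] at this
    rw [this]
    exact (abs_add_le _ _).trans (add_le_add (absA n hn ω i) (M2 i n hn ω))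
  · intro i
    refine (E2_add r (aA i) (M1 i)).trans ?_
    have SE : E2 μ r (fun ω => ∑ k ∈ Finset.range N, b k ω i) ≤ 4 ^ r * (B * h ^ r + A * h ^ r) := by
      have e : (fun ω => ∑ k ∈ Finset.range N, b k ω i)
          = fun ω => D N ω i - ∑ k ∈ Finset.range N, a k ω i := by
        funext ω; rw [dec N le_rfl ω i]; ring
      have sA : AM μ (fun ω => ∑ k ∈ Finset.range N, a k ω i) :=
        AM.sum _ fun n hn => s2 n (Finset.mem_range.mp hn) i
      rw [e]
      refine (E2_sub r (DA N le_rfl i) sA).trans ?_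
      gcongr
      · refine le_trans ?_ (VB N le_rfl)
        exact Finset.single_le_sum (f := fun i => E2 μ r (fun ω => D N ω i))
          (fun i _ => E2_nonneg _ _) (Finset.mem_univ i)
      · refine (E2_mono r (aA i) fun ω => ?_).trans (aE i)
        exact (absA N le_rfl ω i).trans (le_abs_self _)
    calc _ ≤ 4 ^ r * (A * h ^ r + Q * (4 ^ r * (B * h ^ r + A * h ^ r))) := by
          gcongr
          · exact aE i
          · exact (M3 i).trans (by gcongr)
      _ = _ := by ring

end AMil

namespace AMil

lemma norm_pow_le_vs {d : ℕ} (r : ℕ) (hr : 1 ≤ r) (x : Fin d → ℝ) : ‖x‖ ^ (2 * r) ≤ vs r x := by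
  have h0 : ∀ i, 0 ≤ x i ^ (2 * r) := fun i => (even_two_mul r).pow_nonneg _
  rcases isEmpty_or_nonempty (Fin d) with h | h
  · have : x = 0 := Subsingleton.elim _ _
    subst this
    rw [norm_zero, zero_pow (by omega)]
    exact Finset.sum_nonneg fun i _ => h0 i
  · obtain ⟨i, hi⟩ : ∃ i, ‖x‖ ≤ ‖x i‖ := by
      by_contra hcon
      push Not at hcon
      obtain ⟨i0⟩ := h
      have hpos : 0 < ‖x‖ := (norm_nonneg _).trans_lt (hcon i0)
      exact lt_irrefl _ ((pi_norm_lt_iff hpos).mpr hcon)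
    calc ‖x‖ ^ (2 * r) ≤ ‖x i‖ ^ (2 * r) := pow_le_pow_left₀ (norm_nonneg _) hi _
      _ = x i ^ (2 * r) := by rw [Real.norm_eq_abs, Even.pow_abs (even_two_mul r)]
      _ ≤ _ := Finset.single_le_sum (f := fun i => x i ^ (2 * r)) (fun i _ => h0 i) (Finset.mem_univ i)

lemma growth_pow {d : ℕ} (r : ℕ) (hr : 1 ≤ r) (x : Fin d → ℝ) (a A : ℝ) (hA : 0 ≤ A)
    (h : |a| ≤ A * (1 + ‖x‖)) : a ^ (2 * r) ≤ 4 ^ r * A ^ (2 * r) * (1 + vs r x) := by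
  rw [← Even.pow_abs (even_two_mul r)]
  have h1 := pow_le_pow_left₀ (abs_nonneg a) h (2 * r)
  have h2 := add_pow_le' 1 ‖x‖ r
  rw [one_pow] at h2
  have h3 := norm_pow_le_vs r hr x
  calc _ ≤ (A * (1 + ‖x‖)) ^ (2 * r) := h1
    _ = A ^ (2 * r) * (1 + ‖x‖) ^ (2 * r) := by rw [mul_pow]
    _ ≤ A ^ (2 * r) * (4 ^ r * (1 + vs r x)) := by
      gcongr; exact h2.trans (by gcongr)
    _ = _ := by ring

lemma lip_pow {d : ℕ} (r : ℕ) (hr : 1 ≤ r) (x y : Fin d → ℝ) (a A : ℝ) (hA : 0 ≤ A)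
    (h : |a| ≤ A * ‖x - y‖) : a ^ (2 * r) ≤ 4 ^ r * A ^ (2 * r) * vs r (fun l => x l - y l) := by
  rw [← Even.pow_abs (even_two_mul r)]
  have h1 := pow_le_pow_left₀ (abs_nonneg a) h (2 * r)
  have h3 := norm_pow_le_vs r hr (x - y)
  have h4 : (1:ℝ) ≤ 4 ^ r := one_le_pow₀ (by norm_num)
  calc _ ≤ (A * ‖x - y‖) ^ (2 * r) := h1
    _ = 1 * A ^ (2 * r) * ‖x - y‖ ^ (2 * r) := by rw [mul_pow]; ring
    _ ≤ 4 ^ r * A ^ (2 * r) * vs r (x - y) := by gcongr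

lemma fderiv_comp2 {d m : ℕ} {g : (Fin d → ℝ) → Fin d → Fin m → ℝ} (hg : ContDiff ℝ 2 g)
    (x v : Fin d → ℝ) (i : Fin d) (k : Fin m) :
    fderiv ℝ (fun y => g y i k) x v = fderiv ℝ g x v i k := by
  have h := (hg.differentiable (by norm_num) x).hasFDerivAt
  have h2 := hasFDerivAt_pi'.mp (hasFDerivAt_pi'.mp h i) k
  rw [h2.fderiv]
  rfl

lemma coef_exists {d m : ℕ} (r : ℕ) (hr : 1 ≤ r)
    (f : (Fin d → ℝ) → Fin d → ℝ) (g : (Fin d → ℝ) → Fin d → Fin m → ℝ)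
    (hf : ContDiff ℝ 2 f) (hg : ContDiff ℝ 2 g) (Cfg : ℝ)
    (hf1 : ∀ x, ‖fderiv ℝ f x‖ ≤ Cfg) (hg1 : ∀ x, ‖fderiv ℝ g x‖ ≤ Cfg) :
    ∃ L, Coef r L f g (milsteinH g) := by
  have hC : 0 ≤ Cfg := (norm_nonneg _).trans (hf1 0)
  have lf : ∀ x y, ‖f x - f y‖ ≤ Cfg * ‖x - y‖ := fun x y =>
    Convex.norm_image_sub_le_of_norm_fderiv_le (s := Set.univ)
      (fun z _ => hf.differentiable (by norm_num) z) (fun z _ => hf1 z) convex_univ trivial trivial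
  have lg : ∀ x y, ‖g x - g y‖ ≤ Cfg * ‖x - y‖ := fun x y =>
    Convex.norm_image_sub_le_of_norm_fderiv_le (s := Set.univ)
      (fun z _ => hg.differentiable (by norm_num) z) (fun z _ => hg1 z) convex_univ trivial trivial
  set A : ℝ := ‖f 0‖ + ‖g 0‖ + Cfg with hA
  have hA0 : 0 ≤ A := by positivity
  set B : ℝ := A + d * Cfg * A with hB
  have hB0 : 0 ≤ B := by positivity
  have hAB : A ≤ B := le_add_of_nonneg_right (by positivity)
  have hCB : Cfg ≤ B := le_trans (by rw [hA]; linarith [norm_nonneg (f 0), norm_nonneg (g 0)]) hAB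
  have lf' : ∀ i x y, |f x i - f y i| ≤ B * ‖x - y‖ := fun i x y =>
    ((norm_le_pi_norm (f x - f y) i).trans (lf x y)).trans (by gcongr)
  have lg' : ∀ i j x y, |g x i j - g y i j| ≤ B * ‖x - y‖ := fun i j x y =>
    (((norm_le_pi_norm ((g x - g y) i) j).trans (norm_le_pi_norm (g x - g y) i)).trans
      (lg x y)).trans (by gcongr)
  have gf : ∀ i x, |f x i| ≤ A * (1 + ‖x‖) := fun i x => by
    have h1 : ‖f x‖ ≤ ‖f 0‖ + Cfg * ‖x‖ := by
      have := lf x 0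
      rw [sub_zero] at this
      have := norm_le_norm_add_norm_sub' (f x) (f 0)
      linarith
    refine (norm_le_pi_norm (f x) i).trans (h1.trans ?_)
    have := norm_nonneg x
    have := norm_nonneg (f 0)
    have := norm_nonneg (g 0)
    rw [hA]; nlinarith
  have gg : ∀ i j x, |g x i j| ≤ A * (1 + ‖x‖) := fun i j x => by
    have h1 : ‖g x‖ ≤ ‖g 0‖ + Cfg * ‖x‖ := by
      have := lg x 0
      rw [sub_zero] at this
      have := norm_le_norm_add_norm_sub' (g x) (g 0)
      linarith
    refine ((norm_le_pi_norm (g x i) j).trans (norm_le_pi_norm (g x) i)).trans (h1.trans ?_)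
    have := norm_nonneg x
    have := norm_nonneg (f 0)
    have := norm_nonneg (g 0)
    rw [hA]; nlinarith
  have gc : ∀ i j, Continuous fun x => g x i j := fun i j =>
    (continuous_apply_apply i j).comp hg.continuous
  have hH : ∀ x i j k, milsteinH g x i j k
      = 1 / 2 * ∑ l : Fin d, g x l j * (fderiv ℝ g x (Pi.single l 1)) i k := fun x i j k => by
    unfold milsteinH
    simp only [fderiv_comp2 hg]
  have gH : ∀ i j k x, |milsteinH g x i j k| ≤ (d * Cfg * A) * (1 + ‖x‖) := fun i j k x => by
    rw [hH, abs_mul, abs_of_nonneg (by norm_num : (0:ℝ) ≤ 1 / 2)]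
    have e : ∀ l : Fin d, |g x l j * (fderiv ℝ g x (Pi.single l 1)) i k| ≤ A * (1 + ‖x‖) * Cfg :=
      fun l => by
      rw [abs_mul]
      refine mul_le_mul (gg _ _ _) ?_ (abs_nonneg _) (by positivity)
      refine ((norm_le_pi_norm (fderiv ℝ g x (Pi.single l 1) i) k).trans
        (norm_le_pi_norm (fderiv ℝ g x (Pi.single l 1)) i)).trans ?_
      refine (ContinuousLinearMap.le_opNorm _ _).trans ?_
      have : ‖(Pi.single l 1 : Fin d → ℝ)‖ ≤ 1 := by
        rw [Pi.norm_single]; simp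
      calc _ ≤ Cfg * 1 := mul_le_mul (hg1 x) this (norm_nonneg _) hC
        _ = Cfg := mul_one _
    have s : |∑ l : Fin d, g x l j * (fderiv ℝ g x (Pi.single l 1)) i k| ≤ d * (A * (1 + ‖x‖) * Cfg) := by
      refine (Finset.abs_sum_le_sum_abs _ _).trans ((Finset.sum_le_sum fun l _ => e l).trans ?_)
      simp
    have s0 := abs_nonneg (∑ l : Fin d, g x l j * (fderiv ℝ g x (Pi.single l 1)) i k)
    calc _ ≤ 1 * |∑ l : Fin d, g x l j * (fderiv ℝ g x (Pi.single l 1)) i k| := by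
          gcongr; norm_num
      _ ≤ d * (A * (1 + ‖x‖) * Cfg) := by rw [one_mul]; exact s
      _ = _ := by ring
  refine ⟨4 ^ r * B ^ (2 * r), by positivity, fun i => (continuous_apply i).comp hf.continuous, gc, ?_,
    fun i x y => lip_pow r hr x y _ B hB0 (lf' i x y),
    fun i j x y => lip_pow r hr x y _ B hB0 (lg' i j x y),
    fun i x => growth_pow r hr x _ B hB0 ((gf i x).trans (by gcongr)),
    fun i j x => growth_pow r hr x _ B hB0 ((gg i j x).trans (by gcongr)),
    fun i j k x => growth_pow r hr x _ B hB0 ((gH i j k x).trans ?_)⟩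
  · intro i j k
    simp only [hH]
    refine continuous_const.mul (continuous_finsetSum _ fun l _ => (gc l j).mul ?_)
    exact (continuous_apply_apply i k).comp
      ((hg.continuous_fderiv (by norm_num)).clm_apply continuous_const)
  · have : d * Cfg * A ≤ B := le_add_of_nonneg_left hA0
    gcongr

lemma gauss_mom {Ω : Type} {mΩ : MeasurableSpace Ω} {μ : Measure Ω} [IsProbabilityMeasure μ]
    {h : ℝ} (h0 : 0 < h)
    {w : Ω → ℝ} (hw : Measurable w) (hl : μ.map w = gaussianReal 0 (Real.toNNReal h)) :
    AM μ w ∧ ∫ ω, w ω ∂μ = 0 ∧ ∫ ω, w ω ^ 2 ∂μ = h ∧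
      ∀ s : ℕ, E2 μ s w = (∫ z, z ^ (2 * s) ∂(gaussianReal 0 1)) * h ^ s := by
  have tr : ∀ φ : ℝ → ℝ, Measurable φ → ∫ ω, φ (w ω) ∂μ = ∫ z, φ z ∂(gaussianReal 0 (Real.toNNReal h)) :=
    fun φ hφ => by rw [← hl, integral_map hw.aemeasurable hφ.aestronglyMeasurable]
  refine ⟨⟨hw, fun n => ?_⟩, ?_, ?_, fun s => ?_⟩
  · have h1 : Integrable (fun z : ℝ => |z| ^ n) (μ.map w) := by
      rw [hl]
      have := (memLp_id_gaussianReal (μ := 0) (v := Real.toNNReal h) n).integrable_norm_pow'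
      simpa using this
    exact h1.comp_measurable hw
  · rw [tr (fun z => z) measurable_id, integral_id_gaussianReal]
  · rw [tr (fun z => z ^ 2) (by fun_prop)]
    have := variance_id_gaussianReal (μ := 0) (v := Real.toNNReal h)
    rw [variance_eq_integral aemeasurable_id] at this
    simpa [h0.le, integral_id_gaussianReal] using this
  · unfold E2
    rw [tr (fun z => z ^ (2 * s)) (by fun_prop)]
    have e : gaussianReal 0 (Real.toNNReal h) = (gaussianReal 0 1).map (Real.sqrt h * ·) := by
      rw [gaussianReal_map_const_mul]
      congr 1
      · simp
      · ext; simp [Real.sq_sqrt h0.le, h0.le]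
    rw [e, integral_map (by fun_prop) (by fun_prop)]
    simp only [mul_pow]
    rw [integral_const_mul, pow_mul, Real.sq_sqrt h0.le, mul_comm]

lemma noise_of_indep {Ω : Type} {mΩ : MeasurableSpace Ω} {μ : Measure Ω} [IsProbabilityMeasure μ]
    {F G : MeasurableSpace Ω} (hi : Indep F G μ) {r : ℕ} {ξ : Ω → ℝ} {v : ℝ}
    (hG : Measurable[G] ξ) (hA : AM μ ξ) (h0 : ∫ ω, ξ ω ∂μ = 0) (hv : E2 μ r ξ ≤ v) :
    IsNoise μ r F ξ v := by
  have ind : ∀ Y : Ω → ℝ, Measurable[F] Y → AM μ Y → IndepFun Y ξ μ := fun Y hY _ => by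
    rw [IndepFun_iff_Indep]
    exact indep_of_indep_of_le_left (indep_of_indep_of_le_right hi hG.comap_le) hY.comap_le
  refine ⟨⟨hA, fun Y hY hYA => ?_⟩, fun Y hY hYA => ?_⟩
  · rw [(ind Y hY hYA).integral_fun_mul_eq_mul_integral hYA.1.aestronglyMeasurable
      hA.1.aestronglyMeasurable, h0, mul_zero]
  · have := ((ind Y hY hYA).comp (φ := fun z => z ^ (2 * r)) (ψ := fun z => z ^ (2 * r))
      (by fun_prop) (by fun_prop)).integral_fun_mul_eq_mul_integral (hYA.pow _).1.aestronglyMeasurable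
      (hA.pow _).1.aestronglyMeasurable
    unfold E2
    simp only [mul_pow]
    simp only [Function.comp] at this
    rw [this, mul_comm]
    exact mul_le_mul_of_nonneg_right hv (E2_nonneg r Y)

/-- the second order noise -/
lemma zeta_mom {Ω : Type} {mΩ : MeasurableSpace Ω} {μ : Measure Ω} [IsProbabilityMeasure μ] (r : ℕ)
    {h : ℝ} (h0 : 0 < h) {m : ℕ} {w : Fin m → Ω → ℝ} (hw : ∀ j, Measurable (w j))
    (hl : ∀ j, μ.map (w j) = gaussianReal 0 (Real.toNNReal h))
    (hi : ∀ j k, j ≠ k → IndepFun (w j) (w k) μ) (j k : Fin m) :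
    AM μ (fun ω => w j ω * w k ω - if j = k then h else 0) ∧
    ∫ ω, (w j ω * w k ω - if j = k then h else 0) ∂μ = 0 ∧
    E2 μ r (fun ω => w j ω * w k ω - if j = k then h else 0) ≤
      4 ^ r * ((∫ z, z ^ (2 * (2 * r)) ∂(gaussianReal 0 1)) + 1) * h ^ (2 * r) := by
  have g := fun j => gauss_mom h0 (hw j) (hl j)
  have A1 : AM μ (fun ω => w j ω * w k ω) := (g j).1.mul (g k).1
  have A2 : AM μ (fun _ : Ω => if j = k then h else 0) := AM.const _
  refine ⟨A1.sub A2, ?_, ?_⟩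
  · rw [integral_sub A1.integrable A2.integrable]
    by_cases e : j = k
    · subst e
      simp only [if_true, ← pow_two, (g j).2.2.1]
      simp
    · simp only [e, if_false]
      rw [(hi j k e).integral_fun_mul_eq_mul_integral (hw j).aestronglyMeasurable
        (hw k).aestronglyMeasurable, (g j).2.1]
      simp
  · refine (E2_sub r A1 A2).trans ?_
    rw [mul_assoc]
    gcongr
    rw [add_mul, one_mul]
    gcongr ?_ + ?_
    · have e : ∫ ω, ((w j ω) ^ (2 * (2 * r)) + (w k ω) ^ (2 * (2 * r))) ∂μ
        = 2 * ((∫ z, z ^ (2 * (2 * r)) ∂(gaussianReal 0 1)) * h ^ (2 * r)) := by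
        rw [integral_add ((g j).1.pow _).integrable ((g k).1.pow _).integrable]
        have e1 := (g j).2.2.2 (2 * r)
        have e2 := (g k).2.2.2 (2 * r)
        unfold E2 at e1 e2
        rw [e1, e2]; ring
      have le : 2 * E2 μ r (fun ω => w j ω * w k ω) ≤
          ∫ ω, ((w j ω) ^ (2 * (2 * r)) + (w k ω) ^ (2 * (2 * r))) ∂μ := by
        unfold E2
        rw [← integral_const_mul]
        refine integral_mono ((A1.pow _).const_mul _).integrable
          (((g j).1.pow _).add ((g k).1.pow _)).integrable fun ω => ?_
        simp only [mul_pow]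
        have := two_mul_le_add_sq (w j ω ^ (2 * r)) (w k ω ^ (2 * r))
        have a : ∀ y : ℝ, y ^ (2 * (2 * r)) = (y ^ (2 * r)) ^ 2 := fun y => by
          rw [← pow_mul]; congr 1; ring
        rw [a, a]
        linarith
      linarith
    · unfold E2
      simp only [integral_const, probReal_univ, one_smul]
      split_ifs with e
      · exact le_rfl
      · rcases Nat.eq_zero_or_pos r with rfl | hr
        · simp
        · rw [zero_pow (by omega)]; positivity

end AMil

namespace AMil

/-- sigma-algebra generated by the increments with index in `S` -/
def GS {Ω : Type} {N m : ℕ} (W : Fin N → Bool → Ω → Fin m → ℝ) (S : Set (Fin N × Bool × Fin m)) :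
    MeasurableSpace Ω :=
  ⨆ q ∈ S, MeasurableSpace.comap (fun ω => W q.1 q.2.1 ω q.2.2) inferInstance

/-- extension of the increments to all natural indices -/
noncomputable def xi {Ω : Type} {N m : ℕ} (W : Fin N → Bool → Ω → Fin m → ℝ) (b : Bool) (n : ℕ)
    (j : Fin m) (ω : Ω) : ℝ :=
  if hn : n < N then W ⟨n, hn⟩ b ω j else 0

/-- the second order noise -/
noncomputable def ze {Ω : Type} {N m : ℕ} (h : ℝ) (W : Fin N → Bool → Ω → Fin m → ℝ) (b : Bool) (n : ℕ)
    (j k : Fin m) (ω : Ω) : ℝ :=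
  xi W b n j ω * xi W b n k ω - if j = k then h else 0

lemma GS_mono {Ω : Type} {N m : ℕ} (W : Fin N → Bool → Ω → Fin m → ℝ)
    {S S' : Set (Fin N × Bool × Fin m)} (h : S ⊆ S') : GS W S ≤ GS W S' :=
  biSup_mono h

lemma GS_meas {Ω : Type} {N m : ℕ} (W : Fin N → Bool → Ω → Fin m → ℝ)
    {S : Set (Fin N × Bool × Fin m)} {n : Fin N} {b : Bool} {j : Fin m} (h : (n, b, j) ∈ S) :
    Measurable[GS W S] (fun ω => W n b ω j) := by
  have : MeasurableSpace.comap (fun ω => W n b ω j) inferInstance ≤ GS W S :=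
    le_biSup (fun q : Fin N × Bool × Fin m =>
      MeasurableSpace.comap (fun ω => W q.1 q.2.1 ω q.2.2) inferInstance) h
  exact (comap_measurable _).mono this le_rfl

lemma GS_indep {Ω : Type} {mΩ : MeasurableSpace Ω} {μ : Measure Ω} {N m : ℕ}
    {W : Fin N → Bool → Ω → Fin m → ℝ} (hW : ∀ n b j, Measurable fun ω => W n b ω j)
    (hi : iIndepFun (fun q : Fin N × Bool × Fin m => fun ω => W q.1 q.2.1 ω q.2.2) μ)
    {S S' : Set (Fin N × Bool × Fin m)} (h : Disjoint S S') : Indep (GS W S) (GS W S') μ := by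
  have h1 : iIndep (fun q : Fin N × Bool × Fin m =>
    MeasurableSpace.comap (fun ω => W q.1 q.2.1 ω q.2.2) inferInstance) μ := hi.iIndep
  unfold GS
  exact indep_iSup_of_disjoint (m := fun q : Fin N × Bool × Fin m =>
    MeasurableSpace.comap (fun ω => W q.1 q.2.1 ω q.2.2) inferInstance)
    (fun q => (hW q.1 q.2.1 q.2.2).comap_le) h1 h

/-- the filtration -/
def FS {Ω : Type} {N m : ℕ} (W : Fin N → Bool → Ω → Fin m → ℝ) (n : ℕ) : MeasurableSpace Ω :=
  GS W {q | (q.1 : ℕ) < n}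

/-- the filtration at half steps -/
def FS1 {Ω : Type} {N m : ℕ} (W : Fin N → Bool → Ω → Fin m → ℝ) (b : Bool) (n : ℕ) :
    MeasurableSpace Ω :=
  GS W {q | (q.1 : ℕ) < n ∨ ((q.1 : ℕ) = n ∧ q.2.1 = b)}

lemma FS_mono {Ω : Type} {N m : ℕ} (W : Fin N → Bool → Ω → Fin m → ℝ) : Monotone (FS W) :=
  fun _ _ h => GS_mono W fun _ hq => lt_of_lt_of_le hq h

lemma FS_le {Ω : Type} {N m : ℕ} (W : Fin N → Bool → Ω → Fin m → ℝ) (b : Bool) (n : ℕ) :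
    FS W n ≤ FS1 W b n :=
  GS_mono W fun _ hq => Or.inl hq

lemma FS1_le {Ω : Type} {N m : ℕ} (W : Fin N → Bool → Ω → Fin m → ℝ) (b : Bool) (n : ℕ) :
    FS1 W b n ≤ FS W (n + 1) :=
  GS_mono W fun q hq => by
    simp only [Set.mem_ofPred_eq] at hq ⊢
    omega

lemma xi_meas {Ω : Type} {N m : ℕ} (W : Fin N → Bool → Ω → Fin m → ℝ)
    {S : Set (Fin N × Bool × Fin m)} {n : ℕ} {b : Bool} {j : Fin m}
    (h : ∀ hn : n < N, (⟨n, hn⟩, b, j) ∈ S) : Measurable[GS W S] (xi W b n j) := by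
  unfold xi
  by_cases hn : n < N
  · simp only [hn, dif_pos]
    exact GS_meas W (h hn)
  · simp only [hn, dif_neg, not_false_eq_true]
    exact measurable_const

lemma ze_meas {Ω : Type} {N m : ℕ} (h : ℝ) (W : Fin N → Bool → Ω → Fin m → ℝ)
    {F : MeasurableSpace Ω} {n : ℕ} {b : Bool}
    (hx : ∀ j, Measurable (xi W b n j)) (j k : Fin m) : Measurable (ze h W b n j k) :=
  ((hx j).mul (hx k)).sub measurable_const

lemma step_meas {Ω : Type} {F : MeasurableSpace Ω} {d m : ℕ} {r : ℕ} {L h : ℝ}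
    {f : (Fin d → ℝ) → Fin d → ℝ} {g : (Fin d → ℝ) → Fin d → Fin m → ℝ}
    {H : (Fin d → ℝ) → Fin d → Fin m → Fin m → ℝ}
    (co : Coef r L f g H) {X X' : Ω → Fin d → ℝ} {ξ : Fin m → Ω → ℝ} {ζ : Fin m → Fin m → Ω → ℝ}
    (hX : ∀ i, Measurable (fun ω => X ω i)) (hξ : ∀ j, Measurable (ξ j))
    (hζ : ∀ j k, Measurable (ζ j k))
    (st : ∀ ω i, X' ω i = X ω i + f (X ω) i * h + (∑ j, g (X ω) i j * ξ j ω)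
      + ∑ j, ∑ k, H (X ω) i j k * ζ j k ω) (i : Fin d) : Measurable (fun ω => X' ω i) := by
  simp only [st]
  refine (((hX i).add ((comp_meas hX (co.fc i)).mul_const h)).add ?_).add ?_
  · exact Finset.measurable_fun_sum _ fun j _ => (comp_meas hX (co.gc i j)).mul (hξ j)
  · exact Finset.measurable_fun_sum _ fun j _ => Finset.measurable_fun_sum _ fun k _ =>
      (comp_meas hX (co.Hc i j k)).mul (hζ j k)

lemma noises {Ω : Type} {mΩ : MeasurableSpace Ω} {μ : Measure Ω} [IsProbabilityMeasure μ] {N m : ℕ}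
    (r : ℕ) {h c : ℝ} (h0 : 0 < h)
    (c1 : (∫ z, z ^ (2 * r) ∂(gaussianReal 0 1)) ≤ c)
    (c2 : 4 ^ r * ((∫ z, z ^ (2 * (2 * r)) ∂(gaussianReal 0 1)) + 1) ≤ c)
    {W : Fin N → Bool → Ω → Fin m → ℝ} (hW : ∀ n b j, Measurable fun ω => W n b ω j)
    (hl : ∀ n b j, μ.map (fun ω => W n b ω j) = gaussianReal 0 (Real.toNNReal h))
    (hi : iIndepFun (fun q : Fin N × Bool × Fin m => fun ω => W q.1 q.2.1 ω q.2.2) μ)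
    (b : Bool) (n : ℕ) (hn : n < N) (S : Set (Fin N × Bool × Fin m))
    (hS : ∀ q ∈ S, ¬ ((q.1 : ℕ) = n ∧ q.2.1 = b)) :
    (∀ j, IsNoise μ r (GS W S) (xi W b n j) (c * h ^ r)) ∧
    ∀ j k, IsNoise μ r (GS W S) (ze h W b n j k) (c * h ^ (2 * r)) := by
  have xe : ∀ j, xi W b n j = fun ω => W ⟨n, hn⟩ b ω j := fun j => by
    funext ω; simp only [xi, hn, dif_pos]
  set S' : Set (Fin N × Bool × Fin m) := {q | (q.1 : ℕ) = n ∧ q.2.1 = b} with hS'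
  have dj : Disjoint S S' := Set.disjoint_left.mpr hS
  have ind := GS_indep hW hi dj
  have xm : ∀ j, Measurable[GS W S'] (xi W b n j) := fun j => xi_meas W fun _ => ⟨rfl, rfl⟩
  have hw : ∀ j, Measurable (xi W b n j) := fun j => by rw [xe]; exact hW _ _ _
  have hll : ∀ j, μ.map (xi W b n j) = gaussianReal 0 (Real.toNNReal h) := fun j => by
    rw [xe]; exact hl _ _ _
  have hii : ∀ j k, j ≠ k → IndepFun (xi W b n j) (xi W b n k) μ := fun j k hjk => by
    rw [xe, xe]
    exact hi.indepFun (i := (⟨n, hn⟩, b, j)) (j := (⟨n, hn⟩, b, k)) (by simpa using hjk)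
  refine ⟨fun j => ?_, fun j k => ?_⟩
  · obtain ⟨a1, a2, _, a4⟩ := gauss_mom h0 (hw j) (hll j)
    refine noise_of_indep ind (xm j) a1 a2 ?_
    rw [a4]
    gcongr
  · obtain ⟨a1, a2, a3⟩ := zeta_mom r h0 hw hll hii j k
    refine noise_of_indep ind (ze_meas h W xm j k) a1 a2 (a3.trans ?_)
    gcongr

lemma mk_path {d N m : ℕ} {Ω : Type} {mΩ : MeasurableSpace Ω} {μ : Measure Ω}
    [IsProbabilityMeasure μ] {r : ℕ} {h c L : ℝ} (h0 : 0 < h)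
    (c1 : (∫ z, z ^ (2 * r) ∂(gaussianReal 0 1)) ≤ c)
    (c2 : 4 ^ r * ((∫ z, z ^ (2 * (2 * r)) ∂(gaussianReal 0 1)) + 1) ≤ c)
    {f : (Fin d → ℝ) → Fin d → ℝ} {g : (Fin d → ℝ) → Fin d → Fin m → ℝ}
    (co : Coef r L f g (milsteinH g)) (x₀ : Fin d → ℝ)
    {W : Fin N → Bool → Ω → Fin m → ℝ} (hW : ∀ n b j, Measurable fun ω => W n b ω j)
    (hl : ∀ n b j, μ.map (fun ω => W n b ω j) = gaussianReal 0 (Real.toNNReal h))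
    (hi : iIndepFun (fun q : Fin N × Bool × Fin m => fun ω => W q.1 q.2.1 ω q.2.2) μ)
    (b b' : Bool) (hb : b' ≠ b) (X : ℕ → Ω → Fin d → ℝ) (startAt : ∀ ω, X 0 ω = x₀)
    (s1 : ∀ (n : Fin N) ω, X (2 * (n : ℕ) + 1) ω = milsteinStep f g h (X (2 * (n : ℕ)) ω) (W n b ω))
    (s2 : ∀ (n : Fin N) ω, X (2 * (n : ℕ) + 2) ω
      = milsteinStep f g h (X (2 * (n : ℕ) + 1) ω) (W n b' ω)) :
    Path μ r h c f g (milsteinH g) x₀ N (FS W) (FS1 W b) (fun n => X (2 * n)) (fun n => X (2 * n + 1))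
      (xi W b) (xi W b') (ze h W b) (ze h W b') := by
  have xe : ∀ b n (hn : n < N) j ω, xi W b n j ω = W ⟨n, hn⟩ b ω j := fun b n hn j ω => by
    simp only [xi, hn, dif_pos]
  have st : ∀ n < N, ∀ ω i, X (2 * n + 1) ω i = X (2 * n) ω i + f (X (2 * n) ω) i * h
      + (∑ j, g (X (2 * n) ω) i j * xi W b n j ω)
      + ∑ j, ∑ k, milsteinH g (X (2 * n) ω) i j k * ze h W b n j k ω := fun n hn ω i => by
    have := congrFun (s1 ⟨n, hn⟩ ω) i
    simp only [ze, xe b n hn]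
    exact this
  have st' : ∀ n < N, ∀ ω i, X (2 * (n + 1)) ω i = X (2 * n + 1) ω i + f (X (2 * n + 1) ω) i * h
      + (∑ j, g (X (2 * n + 1) ω) i j * xi W b' n j ω)
      + ∑ j, ∑ k, milsteinH g (X (2 * n + 1) ω) i j k * ze h W b' n j k ω := fun n hn ω i => by
    have := congrFun (s2 ⟨n, hn⟩ ω) i
    simp only [ze, xe b' n hn]
    exact this
  have m1 : ∀ n < N, (∀ i, Measurable[FS W n] (fun ω => X (2 * n) ω i)) →
      ∀ i, Measurable[FS1 W b n] (fun ω => X (2 * n + 1) ω i) := fun n hn hX => by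
    have hx : ∀ j, Measurable[FS1 W b n] (xi W b n j) := fun j =>
      xi_meas W fun _ => Or.inr ⟨rfl, rfl⟩
    exact step_meas co (fun i => (hX i).mono (FS_le W b n) le_rfl) hx (ze_meas h W hx) (st n hn)
  have m2 : ∀ n < N, (∀ i, Measurable[FS1 W b n] (fun ω => X (2 * n + 1) ω i)) →
      ∀ i, Measurable[FS W (n + 1)] (fun ω => X (2 * (n + 1)) ω i) := fun n hn hX => by
    have hx : ∀ j, Measurable[FS W (n + 1)] (xi W b' n j) := fun j =>
      xi_meas W fun _ => Nat.lt_succ_self n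
    exact step_meas co (fun i => (hX i).mono (FS1_le W b n) le_rfl) hx (ze_meas h W hx) (st' n hn)
  have m : ∀ n ≤ N, ∀ i, Measurable[FS W n] (fun ω => X (2 * n) ω i) := by
    intro n
    induction n with
    | zero => intro _ i; simp only [mul_zero, startAt]; exact measurable_const
    | succ n ih => intro hn; exact m2 n (by omega) (m1 n (by omega) (ih (by omega)))
  have no := fun n hn => noises r h0 c1 c2 hW hl hi b n hn {q | (q.1 : ℕ) < n}
    (fun q hq hq' => by simp only [Set.mem_ofPred_eq] at hq; omega)
  have no' := fun n hn => noises r h0 c1 c2 hW hl hi b' n hn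
    {q | (q.1 : ℕ) < n ∨ ((q.1 : ℕ) = n ∧ q.2.1 = b)}
    (fun q hq hq' => by
      rcases hq with hq | hq
      · omega
      · exact hb (hq'.2.symm.trans hq.2))
  exact ⟨fun n _ => FS_le W b n, fun n _ => FS1_le W b n, startAt, m, fun n hn => m1 n hn (m n hn.le),
    fun n hn => (no n hn).1, fun n hn => (no n hn).2, fun n hn => (no' n hn).1,
    fun n hn => (no' n hn).2, st, st'⟩

lemma rpow_bound {y Δ p : ℝ} {r : ℕ} (hy : 0 ≤ y) (hΔ : 0 < Δ) (hp : 0 ≤ p) (hr : p ≤ 2 * r) :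
    y ^ p ≤ Δ ^ (p / 2) * (1 + y ^ (2 * r) / Δ ^ r) := by
  set s := Real.sqrt Δ with hs
  have s0 : 0 < s := Real.sqrt_pos.mpr hΔ
  set u := y / s with hu
  have u0 : 0 ≤ u := by positivity
  have hyu : y = s * u := by rw [hu]; field_simp
  have e1 : s ^ p = Δ ^ (p / 2) := by
    rw [hs, Real.sqrt_eq_rpow, ← Real.rpow_mul hΔ.le]; congr 1; ring
  have e2 : y ^ (2 * r) / Δ ^ r = u ^ (2 * r) := by
    rw [hu, div_pow, pow_mul s, hs, Real.sq_sqrt hΔ.le]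
  rw [e2, hyu, Real.mul_rpow s0.le u0, e1]
  gcongr
  rcases le_total u 1 with h | h
  · have := Real.rpow_le_one u0 h hp
    have : 0 ≤ u ^ (2 * r) := by positivity
    linarith
  · have : u ^ p ≤ u ^ ((2 * r : ℕ) : ℝ) := Real.rpow_le_rpow_of_exponent_le h (by push_cast; exact hr)
    rw [Real.rpow_natCast] at this
    linarith

end AMil

/-- in the antithetic Milstein setting (fine path `Xf` on the fine grid of
spacing `Δt/2`, with `Xf (2n)` the value at coarse time `n Δt`; antithetic path `Xa` with
the two half-step Brownian increments swapped in each coarse step), for every `p ≥ 2`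
there is a constant `K_p`, depending only on `p, T, f, g`, with
`E[max_{0≤n≤N} ‖Xf_n − Xa_n‖^p] ≤ K_p Δt^{p/2}` for every `N ≥ 1`, `Δt = T/N`. -/
theorem antithetic_milstein_fine_antithetic_difference
    {d m : ℕ} (hd : 0 < d) (hm : 0 < m) (T : ℝ) (hT : 0 < T)
    (f : (Fin d → ℝ) → Fin d → ℝ) (g : (Fin d → ℝ) → Fin d → Fin m → ℝ)
    (hf : ContDiff ℝ 2 f) (hg : ContDiff ℝ 2 g) (Cfg : ℝ)
    (hf1 : ∀ x, ‖fderiv ℝ f x‖ ≤ Cfg) (hf2 : ∀ x, ‖iteratedFDeriv ℝ 2 f x‖ ≤ Cfg)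
    (hg1 : ∀ x, ‖fderiv ℝ g x‖ ≤ Cfg) (hg2 : ∀ x, ‖iteratedFDeriv ℝ 2 g x‖ ≤ Cfg)
    (x₀ : Fin d → ℝ) (p : ℝ) (hp : 2 ≤ p) :
    ∃ K : ℝ, ∀ N : ℕ, 1 ≤ N →
      ∀ (Ω : Type) (_ : MeasurableSpace Ω) (μ : Measure Ω), IsProbabilityMeasure μ →
      ∀ (W : Fin N → Bool → Ω → Fin m → ℝ) (Xf Xa Xc : ℕ → Ω → Fin d → ℝ),
        (∀ n b j, Measurable fun ω => W n b ω j) →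
        (∀ n b j, μ.map (fun ω => W n b ω j) = gaussianReal 0 (Real.toNNReal (T / N / 2))) →
        iIndepFun
          (fun q : Fin N × Bool × Fin m => fun ω => W q.1 q.2.1 ω q.2.2) μ →
        (∀ ω, Xf 0 ω = x₀) → (∀ ω, Xa 0 ω = x₀) → (∀ ω, Xc 0 ω = x₀) →
        (∀ (n : Fin N) ω, Xf (2 * (n : ℕ) + 1) ω
            = milsteinStep f g (T / N / 2) (Xf (2 * (n : ℕ)) ω) (W n false ω)) →
        (∀ (n : Fin N) ω, Xf (2 * (n : ℕ) + 2) ω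
            = milsteinStep f g (T / N / 2) (Xf (2 * (n : ℕ) + 1) ω) (W n true ω)) →
        (∀ (n : Fin N) ω, Xa (2 * (n : ℕ) + 1) ω
            = milsteinStep f g (T / N / 2) (Xa (2 * (n : ℕ)) ω) (W n true ω)) →
        (∀ (n : Fin N) ω, Xa (2 * (n : ℕ) + 2) ω
            = milsteinStep f g (T / N / 2) (Xa (2 * (n : ℕ) + 1) ω) (W n false ω)) →
        (∀ (n : Fin N) ω, Xc ((n : ℕ) + 1) ω
            = milsteinStep f g (T / N) (Xc (n : ℕ) ω) (W n false ω + W n true ω)) →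
        (∫ ω, (Finset.range (N + 1)).sup'
            (Finset.nonempty_range_iff.mpr (Nat.succ_ne_zero N))
            (fun n => ‖Xf (2 * n) ω - Xa (2 * n) ω‖ ^ p) ∂μ)
          ≤ K * (T / N) ^ (p / 2) := by
  obtain ⟨r, hr⟩ := exists_nat_ge p
  have hr1 : 1 ≤ r := by
    have : (1:ℝ) ≤ r := by linarith
    exact_mod_cast this
  have hpr : p ≤ 2 * r := by linarith
  obtain ⟨L, co⟩ := AMil.coef_exists r hr1 f g hf hg Cfg hf1 hg1
  set c1 : ℝ := ∫ z, z ^ (2 * r) ∂(gaussianReal 0 1) with hc1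
  set c2 : ℝ := 4 ^ r * ((∫ z, z ^ (2 * (2 * r)) ∂(gaussianReal 0 1)) + 1) with hc2
  have c10 : 0 ≤ c1 := integral_nonneg fun z => (even_two_mul r).pow_nonneg _
  have c1m : c1 ≤ max c1 c2 := le_max_left _ _
  have c2m : c2 ≤ max c1 c2 := le_max_right _ _
  obtain ⟨C, hC, pb⟩ := AMil.pair_bound d m r hr1 T (max c1 c2) L (c10.trans c1m) hT x₀
  refine ⟨d * (1 + C), ?_⟩
  intro N hN Ω mΩ μ hμ W Xf Xa Xc hW hl hi f0 a0 _ sf1 sf2 sa1 sa2 _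
  have hN0 : (0:ℝ) < N := by exact_mod_cast hN
  have hN1 : (1:ℝ) ≤ N := by exact_mod_cast hN
  set Δ : ℝ := T / N with hΔ
  have Δ0 : 0 < Δ := by positivity
  have h0 : 0 < Δ / 2 := by positivity
  have ΔT : Δ ≤ T := div_le_self hT.le hN1
  have NΔ : N * Δ = T := by rw [hΔ]; field_simp
  have P1 := AMil.mk_path h0 c1m c2m co x₀ hW hl hi false true (by simp) Xf f0 sf1 sf2
  have P2 := AMil.mk_path h0 c1m c2m co x₀ hW hl hi true false (by simp) Xa a0 sa1 sa2
  obtain ⟨Z, Z1, Z2, Z3⟩ := pb (Δ / 2) h0 (by linarith) N (by linarith) f g _ co μ _ _ _ _ _ _ _ _ _ _ _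
    (AMil.FS_mono W) P1 P2
  have int : ∀ i, Integrable (fun ω => 1 + Z i ω ^ (2 * r) / Δ ^ r) μ := fun i =>
    (integrable_const _).add (((Z1 i).pow _).integrable.div_const _)
  have bd : ∀ ω, (Finset.range (N + 1)).sup'
      (Finset.nonempty_range_iff.mpr (Nat.succ_ne_zero N))
      (fun n => ‖Xf (2 * n) ω - Xa (2 * n) ω‖ ^ p)
      ≤ Δ ^ (p / 2) * ∑ i, (1 + Z i ω ^ (2 * r) / Δ ^ r) := fun ω => by
    refine Finset.sup'_le _ _ fun n hn => ?_
    have hn' : n ≤ N := by have := Finset.mem_range.mp hn; omega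
    have y0 := norm_nonneg (Xf (2 * n) ω - Xa (2 * n) ω)
    refine (AMil.rpow_bound (r := r) y0 Δ0 (by linarith) hpr).trans ?_
    gcongr
    have hv := AMil.norm_pow_le_vs r hr1 (Xf (2 * n) ω - Xa (2 * n) ω)
    have hz : AMil.vs r (Xf (2 * n) ω - Xa (2 * n) ω) ≤ ∑ i, Z i ω ^ (2 * r) := by
      refine Finset.sum_le_sum fun i _ => ?_
      rw [← Even.pow_abs (even_two_mul r)]
      exact pow_le_pow_left₀ (abs_nonneg _) (Z2 i n hn' ω) _
    rw [Finset.sum_add_distrib, ← Finset.sum_div]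
    have hd1 : (1:ℝ) ≤ d := by exact_mod_cast hd
    gcongr
    · simpa using hd1
    · exact hv.trans hz
  have bi : Integrable (fun ω => Δ ^ (p / 2) * ∑ i, (1 + Z i ω ^ (2 * r) / Δ ^ r)) μ :=
    (integrable_finsetSum _ fun i _ => int i).const_mul _
  have pos : ∀ ω, 0 ≤ (Finset.range (N + 1)).sup'
      (Finset.nonempty_range_iff.mpr (Nat.succ_ne_zero N))
      (fun n => ‖Xf (2 * n) ω - Xa (2 * n) ω‖ ^ p) := fun ω =>
    (Real.rpow_nonneg (norm_nonneg _) p).trans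
      (Finset.le_sup' (fun n => ‖Xf (2 * n) ω - Xa (2 * n) ω‖ ^ p)
        (Finset.mem_range.mpr (Nat.succ_pos N)))
  refine (integral_mono_of_nonneg (Filter.Eventually.of_forall pos) bi
    (Filter.Eventually.of_forall bd)).trans ?_
  rw [integral_const_mul, integral_finsetSum _ fun i _ => int i, mul_comm]
  gcongr
  have each : ∀ i, ∫ ω, (1 + Z i ω ^ (2 * r) / Δ ^ r) ∂μ ≤ 1 + C := fun i => by
    rw [integral_add (integrable_const _) (((Z1 i).pow _).integrable.div_const _), integral_div]
    have z := Z3 i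
    unfold AMil.E2 at z
    simp only [integral_const, probReal_univ, one_smul]
    gcongr
    rw [div_le_iff₀ (by positivity)]
    refine z.trans ?_
    gcongr
    linarith
  calc _ ≤ ∑ _i : Fin d, (1 + C) := Finset.sum_le_sum fun i _ => each i
    _ = _ := by simp; ring
end
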